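/- arXiv:1903.01479 — 3 statements merged into one kernel-verified Lean document; each statement's English description precedes it below -/
import Mathlib

section
/- Let ρ and σ be qubit density matrices with Bloch vectors (r_x,r_y,r_z) and (s_x,s_y,s_z), write r = √(r_x²+r_y²) and s = √(s_x²+s_y²), and let 0 < p ≤ 1. Then there exists a finite family (K_i) of strictly incoherent 2×2 Kraus operators with ∑_i K_iᴴK_i ⪯ I and ∑_i K_i ρ K_iᴴ = p·σ if and only if both of the following hold: (a) r²·s_z² + (1−r_z²)·s² ≤ r², and (b) either p ≤ 1−|r_z| or p²·s² ≤ (r²/(1+|r_z|))·(2p − (1−|r_z|)). (This is the paper's Theorem 1 characterizing which qubit states σ are reachable from ρ with probability p by a stochastic strictly incoherent operation; as established in its proof, condition (b) is only binding for p > 1−|r_z|.) -/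
open Matrix BigOperators
open scoped Kronecker Classical ComplexOrder

/-- The qubit state with Bloch vector `(rx, ry, rz)`:
`ρ = (1/2)(I + rx σx + ry σy + rz σz)`. -/
noncomputable def blochState (rx ry rz : ℝ) : Matrix (Fin 2) (Fin 2) ℂ :=
  !![(1 + rz : ℂ)/2, ((rx : ℂ) - ry * Complex.I)/2;
     ((rx : ℂ) + ry * Complex.I)/2, (1 - rz : ℂ)/2]

/-- `K` is an incoherent Kraus operator: every column has at most one nonzero entry. -/
def IsIncoherentKraus {d : ℕ} (K : Matrix (Fin d) (Fin d) ℂ) : Prop :=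
  ∀ j i i', K i j ≠ 0 → K i' j ≠ 0 → i = i'

/-- `K` is a strictly incoherent Kraus operator: every row and every column
has at most one nonzero entry. -/
def IsSIKraus {d : ℕ} (K : Matrix (Fin d) (Fin d) ℂ) : Prop :=
  (∀ i j j', K i j ≠ 0 → K i j' ≠ 0 → j = j') ∧
  (∀ j i i', K i j ≠ 0 → K i' j ≠ 0 → i = i')

/-- Partial trace over the first (A) factor. -/
noncomputable def ptraceA {dA dB : ℕ} (X : Matrix (Fin dA × Fin dB) (Fin dA × Fin dB) ℂ) :
    Matrix (Fin dB) (Fin dB) ℂ :=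
  fun j j' => ∑ i, X (i, j) (i, j')

/-- Partial trace over the second (B) factor. -/
noncomputable def ptraceB {dA dB : ℕ} (X : Matrix (Fin dA × Fin dB) (Fin dA × Fin dB) ℂ) :
    Matrix (Fin dA) (Fin dA) ℂ :=
  fun i i' => ∑ j, X (i, j) (i', j)

/-- The completely dephasing map: keep the diagonal of `X`. -/
noncomputable def dephase {d : ℕ} (X : Matrix (Fin d) (Fin d) ℂ) : Matrix (Fin d) (Fin d) ℂ :=
  Matrix.diagonal X.diag

/-!
A strictly incoherent family `K` enters only through the substochastic matrix
`W i j = ∑ₙ ‖Kₙ i j‖²`: it transports the populations (the diagonal), and by Cauchy–Schwarz it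
can multiply the coherence (the off-diagonal entry) by any factor of modulus at most
`F = √(W₀₀ W₁₁) + √(W₀₁ W₁₀)` and by no larger one. What remains is to maximise `F` over the
substochastic matrices carrying the populations `a` to `b`. There are two upper bounds:
`a₀ a₁ F² ≤ b₀ b₁`, and, by monotonicity in the column sums as soon as
`2 min a ≤ b₀ + b₁`, `max a · F² ≤ b₀ + b₁ - min a`.
The first one is attained when `min b ≤ min a`, the second one when `min a ≤ min b`.
-/

section Kraus

variable {ι m n : Type*} [Fintype m] {d : ℕ}

theorem conjTranspose_mul_self_apply_self (K : Matrix m n ℂ) (j : n) :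
    (Kᴴ * K) j j = ((∑ i, ‖K i j‖ ^ 2 : ℝ) : ℂ) := by
  simp [mul_apply, Complex.conj_mul']

theorem sum_norm_sq_le_one_of_posSemidef [Fintype ι] [DecidableEq n] {K : ι → Matrix m n ℂ}
    (hK : (1 - ∑ k, (K k)ᴴ * K k).PosSemidef) (j : n) :
    ∑ i, ∑ k, ‖K k i j‖ ^ 2 ≤ 1 := by
  have h := hK.diag_nonneg (i := j)
  simp only [Matrix.sub_apply, Matrix.sum_apply, one_apply_eq,
    conjTranspose_mul_self_apply_self] at h
  rw [← Complex.ofReal_sum, ← Complex.ofReal_one, ← Complex.ofReal_sub,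
    Complex.zero_le_real, sub_nonneg] at h
  rwa [Finset.sum_comm]

theorem isSIKraus_of_perm {K : Matrix (Fin d) (Fin d) ℂ} (σ : Equiv.Perm (Fin d))
    (hK : ∀ i j, K i j ≠ 0 → i = σ j) : IsSIKraus K :=
  ⟨fun i j j' hj hj' => σ.injective ((hK i j hj).symm.trans (hK i j' hj')),
    fun j i i' hi hi' => (hK i j hi).trans (hK i' j hi').symm⟩

theorem IsSIKraus.mul_mul_conjTranspose_apply_self {K : Matrix (Fin d) (Fin d) ℂ}
    (hK : IsSIKraus K) (A : Matrix (Fin d) (Fin d) ℂ) (i : Fin d) :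
    (K * A * Kᴴ) i i = ∑ j, (‖K i j‖ ^ 2 : ℂ) * A j j := by
  simp only [mul_apply, conjTranspose_apply, Finset.sum_mul]
  refine Finset.sum_congr rfl fun j _ => ?_
  rw [Finset.sum_eq_single j, ← Complex.mul_conj']
  · simp only [RCLike.star_def]; ring
  · intro k _ hkj
    by_cases hj : K i j = 0
    · simp [hj]
    · have hk : K i k = 0 := not_not.mp fun hk => hkj (hK.1 i k j hk hj)
      simp [hk]
  · simp

end Kraus

/-- The Hermitian `2 × 2` matrix with populations (diagonal entries) `a` and coherence (lower
left entry) `c`; every Hermitian `2 × 2` matrix is of this form. -/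
def hermitianQubit (a : Fin 2 → ℝ) (c : ℂ) : Matrix (Fin 2) (Fin 2) ℂ :=
  !![(a 0 : ℂ), star c; c, (a 1 : ℂ)]

/-- `B` is obtained from `A` by a strictly incoherent, trace-nonincreasing operation. The success
probability is not recorded separately: it is the trace of `B` when `A` has trace one. -/
def IsSIOReachable {d : ℕ} (A B : Matrix (Fin d) (Fin d) ℂ) : Prop :=
  ∃ (N : ℕ) (K : Fin N → Matrix (Fin d) (Fin d) ℂ), (∀ i, IsSIKraus (K i)) ∧
    ((1 : Matrix (Fin d) (Fin d) ℂ) - ∑ i, (K i)ᴴ * K i).PosSemidef ∧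
    ∑ i, K i * A * (K i)ᴴ = B

/-- `W` is a (column) substochastic matrix carrying the populations `a` to `b`. -/
structure IsSubstochasticTransfer {n : Type*} [Fintype n] (W : Matrix n n ℝ) (a b : n → ℝ) :
    Prop where
  nonneg : ∀ i j, 0 ≤ W i j
  sum_col_le_one : ∀ j, ∑ i, W i j ≤ 1
  mulVec_eq : W *ᵥ a = b

/-- The largest factor by which a strictly incoherent qubit operation with transition weights `W`
can multiply the coherence. -/
noncomputable def coherenceFactor (W : Matrix (Fin 2) (Fin 2) ℝ) : ℝ :=
  √(W 0 0) * √(W 1 1) + √(W 0 1) * √(W 1 0)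

theorem coherenceFactor_nonneg (W : Matrix (Fin 2) (Fin 2) ℝ) : 0 ≤ coherenceFactor W := by
  unfold coherenceFactor; positivity

section Necessity

theorem IsSIKraus.norm_mul_hermitianQubit_mul_conjTranspose_le {K : Matrix (Fin 2) (Fin 2) ℂ}
    (hK : IsSIKraus K) (a : Fin 2 → ℝ) (c : ℂ) :
    ‖(K * hermitianQubit a c * Kᴴ) 1 0‖ ≤
      ‖c‖ * (‖K 0 0‖ * ‖K 1 1‖ + ‖K 0 1‖ * ‖K 1 0‖) := by
  have col_prod (j : Fin 2) : K 1 j * star (K 0 j) = 0 := by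
    by_contra h
    have h₁ := left_ne_zero_of_mul h
    have h₀ := star_ne_zero.mp (right_ne_zero_of_mul h)
    exact one_ne_zero (hK.2 j 1 0 h₁ h₀)
  have entry : (K * hermitianQubit a c * Kᴴ) 1 0 =
      c * (star (K 0 0) * K 1 1) + star c * (star (K 0 1) * K 1 0) := by
    simp only [mul_apply, Fin.sum_univ_two, hermitianQubit, conjTranspose_apply, of_apply,
      cons_val', cons_val_zero, cons_val_one, cons_val_fin_one]
    linear_combination (a 0 : ℂ) * col_prod 0 + (a 1 : ℂ) * col_prod 1
  rw [entry, mul_add]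
  refine (norm_add_le _ _).trans_eq ?_
  simp only [norm_mul, norm_star]

theorem IsSIOReachable.exists_isSubstochasticTransfer {a b : Fin 2 → ℝ} {c d : ℂ}
    (h : IsSIOReachable (hermitianQubit a c) (hermitianQubit b d)) :
    ∃ W, IsSubstochasticTransfer W a b ∧ ‖d‖ ≤ ‖c‖ * coherenceFactor W := by
  obtain ⟨N, K, hK, hsub, hsum⟩ := h
  refine ⟨fun i j => ∑ k, ‖K k i j‖ ^ 2, ⟨fun i j => ?_, fun j => ?_, ?_⟩, ?_⟩
  · exact Finset.sum_nonneg fun k _ => sq_nonneg _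
  · exact sum_norm_sq_le_one_of_posSemidef hsub j
  · have diag_eq (a : Fin 2 → ℝ) (c : ℂ) (i : Fin 2) : hermitianQubit a c i i = a i := by
      fin_cases i <;> rfl
    ext i
    have h := congrFun₂ hsum i i
    simp only [Matrix.sum_apply, (hK _).mul_mul_conjTranspose_apply_self, diag_eq] at h
    rw [Finset.sum_comm] at h
    simp only [mulVec, dotProduct, Finset.sum_mul]
    exact_mod_cast h
  · calc ‖d‖ = ‖∑ k, (K k * hermitianQubit a c * (K k)ᴴ) 1 0‖ := by
          rw [← Matrix.sum_apply, hsum]; rfl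
      _ ≤ ∑ k, ‖c‖ * (‖K k 0 0‖ * ‖K k 1 1‖ + ‖K k 0 1‖ * ‖K k 1 0‖) :=
        norm_sum_le_of_le _ fun k _ =>
          (hK k).norm_mul_hermitianQubit_mul_conjTranspose_le a c
      _ = ‖c‖ * (∑ k, ‖K k 0 0‖ * ‖K k 1 1‖ + ∑ k, ‖K k 0 1‖ * ‖K k 1 0‖) := by
        rw [← Finset.mul_sum, Finset.sum_add_distrib]
      _ ≤ _ := mul_le_mul_of_nonneg_left
        (add_le_add (Real.sum_mul_le_sqrt_mul_sqrt _ (‖K · 0 0‖) (‖K · 1 1‖))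
          (Real.sum_mul_le_sqrt_mul_sqrt _ (‖K · 0 1‖) (‖K · 1 0‖))) (norm_nonneg c)

end Necessity

section Sufficiency

/-- Kraus operators with transition weights `!![x ^ 2, v ^ 2; u ^ 2, y ^ 2]`. The contractions `e`
and `f` adjust the coherence transported by the diagonal and by the antidiagonal operators; the
defects `√(1 - ‖e‖ ^ 2)` and `√(1 - ‖f‖ ^ 2)` restore the populations lost in doing so. -/
noncomputable def contractedKraus (x y u v : ℝ) (e f : ℂ) : Fin 4 → Matrix (Fin 2) (Fin 2) ℂ :=
  ![!![(x : ℂ), 0; 0, e * y], !![0, 0; 0, (√(1 - ‖e‖ ^ 2) * y : ℂ)],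
    !![0, (v : ℂ); f * u, 0], !![0, 0; (√(1 - ‖f‖ ^ 2) * u : ℂ), 0]]

theorem isSIKraus_contractedKraus (x y u v : ℝ) (e f : ℂ) (k : Fin 4) :
    IsSIKraus (contractedKraus x y u v e f k) := by
  apply isSIKraus_of_perm (![1, 1, Equiv.swap 0 1, Equiv.swap 0 1] k)
  intro i j
  fin_cases k <;> fin_cases i <;> fin_cases j <;> simp [contractedKraus]

theorem conj_mul_self_add_defect {e : ℂ} (he : ‖e‖ ≤ 1) :
    star e * e + (√(1 - ‖e‖ ^ 2) : ℂ) ^ 2 = 1 := by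
  have h : 0 ≤ 1 - ‖e‖ ^ 2 := sub_nonneg.mpr (pow_le_one₀ (norm_nonneg e) he)
  rw [RCLike.star_def, Complex.conj_mul', ← Complex.ofReal_pow √_, Real.sq_sqrt h]
  push_cast
  ring

variable {x y u v : ℝ} {e f : ℂ}

theorem sum_conjTranspose_mul_self_contractedKraus (he : ‖e‖ ≤ 1) (hf : ‖f‖ ≤ 1) :
    ∑ k, (contractedKraus x y u v e f k)ᴴ * contractedKraus x y u v e f k =
      diagonal ![((x ^ 2 + u ^ 2 : ℝ) : ℂ), ((v ^ 2 + y ^ 2 : ℝ) : ℂ)] := by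
  have he' := conj_mul_self_add_defect he
  have hf' := conj_mul_self_add_defect hf
  simp only [RCLike.star_def] at he' hf'
  ext i j
  fin_cases i <;> fin_cases j <;>
    simp [contractedKraus, Fin.sum_univ_four, mul_apply, Fin.sum_univ_two]
  · linear_combination (u : ℂ) ^ 2 * hf'
  · linear_combination (y : ℂ) ^ 2 * he'

theorem sum_contractedKraus_mul_hermitianQubit (he : ‖e‖ ≤ 1) (hf : ‖f‖ ≤ 1)
    (a : Fin 2 → ℝ) (c : ℂ) :
    ∑ k, contractedKraus x y u v e f k * hermitianQubit a c *
        (contractedKraus x y u v e f k)ᴴ =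
      hermitianQubit (!![x ^ 2, v ^ 2; u ^ 2, y ^ 2] *ᵥ a)
        (x * y * (e * c) + v * u * (f * star c)) := by
  have he' := conj_mul_self_add_defect he
  have hf' := conj_mul_self_add_defect hf
  simp only [RCLike.star_def] at he' hf'
  ext i j
  fin_cases i <;> fin_cases j <;>
    simp [contractedKraus, Fin.sum_univ_four, Fin.sum_univ_two, hermitianQubit, mulVec,
      vecMul, dotProduct]
  · ring
  · ring
  · ring
  · linear_combination (y : ℂ) ^ 2 * a 1 * he' + (u : ℂ) ^ 2 * a 0 * hf'

theorem exists_norm_le_mul_eq {𝕜 : Type*} [NormedDivisionRing 𝕜] {z w : 𝕜} {r : ℝ} (hr : 0 ≤ r)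
    (h : ‖z‖ ≤ r * ‖w‖) : ∃ t : 𝕜, ‖t‖ ≤ r ∧ t * w = z := by
  refine ⟨z / w, by rw [norm_div]; exact div_le_of_le_mul₀ (norm_nonneg w) hr h, ?_⟩
  rcases eq_or_ne w 0 with rfl | hw
  · rw [norm_zero, mul_zero, norm_le_zero_iff] at h
    rw [h, mul_zero]
  · exact div_mul_cancel₀ z hw

theorem IsSubstochasticTransfer.isSIOReachable {W : Matrix (Fin 2) (Fin 2) ℝ} {a b : Fin 2 → ℝ}
    {c d : ℂ} (hW : IsSubstochasticTransfer W a b) (hd : ‖d‖ ≤ ‖c‖ * coherenceFactor W) :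
    IsSIOReachable (hermitianQubit a c) (hermitianQubit b d) := by
  have hF : ‖(coherenceFactor W : ℂ)‖ = coherenceFactor W :=
    Complex.norm_of_nonneg (coherenceFactor_nonneg W)
  obtain ⟨z, hz, hzd⟩ := exists_norm_le_mul_eq (norm_nonneg c) (hF.symm ▸ hd)
  obtain ⟨e, he, hec⟩ : ∃ e : ℂ, ‖e‖ ≤ 1 ∧ e * c = z :=
    exists_norm_le_mul_eq zero_le_one (by rwa [one_mul])
  obtain ⟨f, hf, hfc⟩ : ∃ f : ℂ, ‖f‖ ≤ 1 ∧ f * star c = z :=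
    exists_norm_le_mul_eq zero_le_one (by rwa [one_mul, norm_star])
  have hsq (i j : Fin 2) : √(W i j) ^ 2 = W i j := Real.sq_sqrt (hW.nonneg i j)
  refine ⟨4, contractedKraus √(W 0 0) √(W 1 1) √(W 1 0) √(W 0 1) e f,
    isSIKraus_contractedKraus _ _ _ _ e f, ?_, ?_⟩
  · rw [sum_conjTranspose_mul_self_contractedKraus he hf, ← diagonal_one, diagonal_sub]
    have hcol (j : Fin 2) : W 0 j + W 1 j ≤ 1 :=
      (Fin.sum_univ_two (W · j)).symm.trans_le (hW.sum_col_le_one j)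
    refine PosSemidef.diagonal (Fin.forall_fin_two.mpr ⟨?_, ?_⟩) <;> simp only [hsq]
    · exact sub_nonneg.mpr (Complex.real_le_real.mpr (hcol 0))
    · exact sub_nonneg.mpr (Complex.real_le_real.mpr (hcol 1))
  · have hW' : !![W 0 0, W 0 1; W 1 0, W 1 1] = W := (eta_fin_two W).symm
    have hcoh : (√(W 0 0) * √(W 1 1) + √(W 0 1) * √(W 1 0) : ℂ) = coherenceFactor W := by
      push_cast [coherenceFactor]
      rfl
    rw [sum_contractedKraus_mul_hermitianQubit he hf, hec, hfc, ← add_mul, hcoh, mul_comm, hzd]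
    simp only [hsq]
    rw [hW', hW.mulVec_eq]

end Sufficiency

theorem isSIOReachable_hermitianQubit_iff_exists_transfer {a b : Fin 2 → ℝ} {c d : ℂ} :
    IsSIOReachable (hermitianQubit a c) (hermitianQubit b d) ↔
      ∃ W, IsSubstochasticTransfer W a b ∧ ‖d‖ ^ 2 ≤ ‖c‖ ^ 2 * coherenceFactor W ^ 2 := by
  have hsq (W : Matrix (Fin 2) (Fin 2) ℝ) :
      ‖d‖ ^ 2 ≤ ‖c‖ ^ 2 * coherenceFactor W ^ 2 ↔ ‖d‖ ≤ ‖c‖ * coherenceFactor W := by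
    rw [← mul_pow, sq_le_sq₀ (norm_nonneg d)
      (mul_nonneg (norm_nonneg c) (coherenceFactor_nonneg W))]
  simp only [hsq]
  exact ⟨fun h => h.exists_isSubstochasticTransfer, fun ⟨_, hW, hd⟩ => hW.isSIOReachable hd⟩

theorem IsSubstochasticTransfer.submatrix {n : Type*} [Fintype n] {W : Matrix n n ℝ} {a b : n → ℝ}
    (hW : IsSubstochasticTransfer W a b) (σ : Equiv.Perm n) :
    IsSubstochasticTransfer (W.submatrix id σ) (a ∘ σ) b where
  nonneg i j := hW.nonneg i (σ j)
  sum_col_le_one j := hW.sum_col_le_one (σ j)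
  mulVec_eq := by
    rw [submatrix_mulVec_equiv, Function.comp_assoc, Equiv.self_comp_symm, Function.comp_id,
      Function.comp_id, hW.mulVec_eq]

theorem coherenceFactor_submatrix_swap (W : Matrix (Fin 2) (Fin 2) ℝ) :
    coherenceFactor (W.submatrix id (Equiv.swap 0 1)) = coherenceFactor W := by
  simp [coherenceFactor, add_comm]

namespace IsSubstochasticTransfer

variable {W : Matrix (Fin 2) (Fin 2) ℝ} {a b : Fin 2 → ℝ}

theorem apply_eq (hW : IsSubstochasticTransfer W a b) (i : Fin 2) :
    b i = W i 0 * a 0 + W i 1 * a 1 := by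
  rw [← hW.mulVec_eq, mulVec, dotProduct, Fin.sum_univ_two]

theorem mul_coherenceFactor_sq_le_mul (hW : IsSubstochasticTransfer W a b) :
    a 0 * a 1 * coherenceFactor W ^ 2 ≤ b 0 * b 1 := by
  have hb (i : Fin 2) : b i = √(W i 0) ^ 2 * a 0 + √(W i 1) ^ 2 * a 1 := by
    rw [Real.sq_sqrt (hW.nonneg i 0), Real.sq_sqrt (hW.nonneg i 1), hW.apply_eq i]
  have gap : b 0 * b 1 - a 0 * a 1 * coherenceFactor W ^ 2 =
      (a 0 * (√(W 0 0) * √(W 1 0)) - a 1 * (√(W 0 1) * √(W 1 1))) ^ 2 := by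
    rw [hb 0, hb 1, coherenceFactor]
    ring
  exact sub_nonneg.mp (gap ▸ sq_nonneg _)

theorem coherenceFactor_sq_le (hW : IsSubstochasticTransfer W a b) :
    coherenceFactor W ^ 2 ≤ (W 0 0 + W 1 0) * (W 0 1 + W 1 1) := by
  have hcol (j : Fin 2) : W 0 j + W 1 j = √(W 0 j) ^ 2 + √(W 1 j) ^ 2 := by
    rw [Real.sq_sqrt (hW.nonneg 0 j), Real.sq_sqrt (hW.nonneg 1 j)]
  have gap : (W 0 0 + W 1 0) * (W 0 1 + W 1 1) - coherenceFactor W ^ 2 =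
      (√(W 0 0) * √(W 0 1) - √(W 1 0) * √(W 1 1)) ^ 2 := by
    rw [hcol 0, hcol 1, coherenceFactor]
    ring
  exact sub_nonneg.mp (gap ▸ sq_nonneg _)

theorem mul_coherenceFactor_sq_le_sub (hW : IsSubstochasticTransfer W a b) (ha : ∀ i, 0 ≤ a i)
    (hab : 2 * a 1 ≤ b 0 + b 1) :
    a 0 * coherenceFactor W ^ 2 ≤ b 0 + b 1 - a 1 := by
  have hcol : W 0 1 + W 1 1 ≤ 1 :=
    (Fin.sum_univ_two (W · 1)).symm.trans_le (hW.sum_col_le_one 1)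
  have htotal : b 0 + b 1 = a 0 * (W 0 0 + W 1 0) + a 1 * (W 0 1 + W 1 1) := by
    rw [hW.apply_eq 0, hW.apply_eq 1]
    ring
  have hmono : 0 ≤ (1 - (W 0 1 + W 1 1)) * (b 0 + b 1 - a 1 * (1 + (W 0 1 + W 1 1))) := by
    refine mul_nonneg (sub_nonneg.mpr hcol) ?_
    linarith [mul_le_mul_of_nonneg_left hcol (ha 1)]
  calc a 0 * coherenceFactor W ^ 2
      ≤ a 0 * ((W 0 0 + W 1 0) * (W 0 1 + W 1 1)) :=
        mul_le_mul_of_nonneg_left hW.coherenceFactor_sq_le (ha 0)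
    _ = (W 0 1 + W 1 1) * (b 0 + b 1 - a 1 * (W 0 1 + W 1 1)) := by rw [htotal]; ring
    _ ≤ b 0 + b 1 - a 1 := by linarith

theorem max_mul_coherenceFactor_sq_le_sub_min (hW : IsSubstochasticTransfer W a b)
    (ha : ∀ i, 0 ≤ a i) (hab : 2 * min (a 0) (a 1) ≤ b 0 + b 1) :
    max (a 0) (a 1) * coherenceFactor W ^ 2 ≤ b 0 + b 1 - min (a 0) (a 1) := by
  rcases le_total (a 1) (a 0) with h | h
  · rw [min_eq_right h] at hab ⊢
    rw [max_eq_left h]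
    exact hW.mul_coherenceFactor_sq_le_sub ha hab
  · rw [min_eq_left h] at hab ⊢
    rw [max_eq_right h, ← coherenceFactor_submatrix_swap]
    exact (hW.submatrix (Equiv.swap 0 1)).mul_coherenceFactor_sq_le_sub (fun i => ha _) hab

end IsSubstochasticTransfer

section Attainment

variable {a b : Fin 2 → ℝ}

theorem isSubstochasticTransfer_fin_two {x y u v : ℝ} (hx : 0 ≤ x) (hy : 0 ≤ y) (hu : 0 ≤ u)
    (hv : 0 ≤ v) (hxu : x + u ≤ 1) (hvy : v + y ≤ 1) (hb₀ : x * a 0 + v * a 1 = b 0)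
    (hb₁ : u * a 0 + y * a 1 = b 1) : IsSubstochasticTransfer !![x, v; u, y] a b where
  nonneg i j := by fin_cases i <;> fin_cases j <;> assumption
  sum_col_le_one := by simpa [Fin.forall_fin_two] using ⟨hxu, hvy⟩
  mulVec_eq := by
    ext i
    fin_cases i <;> simpa [mulVec, dotProduct]

theorem coherenceFactor_sq_eq {x y u v l m T : ℝ} (hx : 0 ≤ x) (hv : 0 ≤ v) (hl : 0 ≤ l)
    (hm : 0 ≤ m) (hlm : l + m = 1) (hT : 0 ≤ T) (hxy : x * y = l ^ 2 * T)
    (hvu : v * u = m ^ 2 * T) : coherenceFactor !![x, v; u, y] ^ 2 = T := by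
  have hF : coherenceFactor !![x, v; u, y] = √T := by
    calc √x * √y + √v * √u = l * √T + m * √T := by
          rw [← Real.sqrt_mul hx, ← Real.sqrt_mul hv, hxy, hvu, Real.sqrt_mul (sq_nonneg l),
            Real.sqrt_mul (sq_nonneg m), Real.sqrt_sq hl, Real.sqrt_sq hm]
      _ = √T := by rw [← add_mul, hlm, one_mul]
  rw [hF, Real.sq_sqrt hT]

-- The inputs contribute to `b 0` in the proportion `l : m` and to `b 1` in the proportion `m : l`;
-- `t = l * b 0 + m * b 1` is the probability drawn from `a 0`.
theorem exists_isSubstochasticTransfer_mul_eq_mul (ha : ∀ i, 0 < a i) (hb : ∀ i, 0 ≤ b i)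
    (hab : b 0 + b 1 ≤ a 0 + a 1) (hmin : min (b 0) (b 1) ≤ min (a 0) (a 1)) :
    ∃ W, IsSubstochasticTransfer W a b ∧ a 0 * a 1 * coherenceFactor W ^ 2 = b 0 * b 1 := by
  obtain ⟨t, ht, ht₀, ht₁⟩ : ∃ t ∈ Set.uIcc (b 0) (b 1), t ≤ a 0 ∧ b 0 + b 1 - t ≤ a 1 := by
    obtain ⟨hmin₀, hmin₁⟩ := le_min_iff.mp hmin
    have hsum := min_add_max (b 0) (b 1)
    exact ⟨max (min (b 0) (b 1)) (b 0 + b 1 - a 1),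
      ⟨le_max_left _ _, max_le min_le_max (by linarith)⟩, max_le hmin₀ (by linarith),
      by linarith [le_max_right (min (b 0) (b 1)) (b 0 + b 1 - a 1)]⟩
  rw [← segment_eq_uIcc] at ht
  obtain ⟨l, m, hl, hm, hlm, rfl⟩ := ht
  rw [smul_eq_mul, smul_eq_mul] at ht₀ ht₁
  have ha₀ := ha 0
  have ha₁ := ha 1
  have hb₀ := hb 0
  have hb₁ := hb 1
  refine ⟨!![l * (b 0 / a 0), m * (b 0 / a 1); m * (b 1 / a 0), l * (b 1 / a 1)],
    isSubstochasticTransfer_fin_two (by positivity) (by positivity) (by positivity) (by positivity)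
      ?_ ?_ ?_ ?_, ?_⟩
  · rw [← mul_div_assoc, ← mul_div_assoc, ← add_div, div_le_one ha₀]
    exact ht₀
  · rw [← mul_div_assoc, ← mul_div_assoc, ← add_div, div_le_one ha₁]
    linear_combination ht₁ + (b 0 + b 1) * hlm
  · field_simp
    linear_combination b 0 * hlm
  · field_simp
    linear_combination b 1 * hlm
  · rw [coherenceFactor_sq_eq (T := b 0 * b 1 / (a 0 * a 1)) (by positivity) (by positivity) hl hm
      hlm (by positivity) (by field_simp) (by field_simp)]
    field_simp

theorem exists_isSubstochasticTransfer_mul_eq_sub (ha₀ : 0 < a 0) (ha₁ : 0 ≤ a 1)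
    (hab : b 0 + b 1 ≤ a 0 + a 1) (hb : ∀ i, a 1 ≤ b i) :
    ∃ W, IsSubstochasticTransfer W a b ∧ a 0 * coherenceFactor W ^ 2 = b 0 + b 1 - a 1 := by
  have hb₀ := hb 0
  have hb₁ := hb 1
  obtain ⟨l, m, hl, hm, hlm, hmix⟩ : b 0 ∈ segment ℝ (b 0 + b 1 - a 1) (a 1) := by
    rw [segment_symm, segment_eq_Icc (by linarith)]
    exact ⟨hb₀, by linarith⟩
  rw [smul_eq_mul, smul_eq_mul] at hmix
  obtain ⟨t, ht⟩ : ∃ t, t * a 0 = b 0 + b 1 - a 1 := ⟨_, div_mul_cancel₀ _ ha₀.ne'⟩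
  have ht₀ : 0 ≤ t := nonneg_of_mul_nonneg_left (by linarith) ha₀
  have ht₁ : t ≤ 1 := le_of_mul_le_mul_right (by linarith) ha₀
  refine ⟨!![l * t, m; m * t, l],
    isSubstochasticTransfer_fin_two (by positivity) hl (by positivity) hm ?_ (by linarith) ?_ ?_,
    ?_⟩
  · rwa [← add_mul, hlm, one_mul]
  · linear_combination l * ht + hmix
  · linear_combination m * ht - hmix + (b 0 + b 1) * hlm
  · rw [coherenceFactor_sq_eq (T := t) (by positivity) hm hl hm hlm ht₀ (by ring) (by ring),
      mul_comm, ht]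

theorem exists_isSubstochasticTransfer_max_mul_eq_sub_min (ha : ∀ i, 0 ≤ a i)
    (ha_pos : 0 < max (a 0) (a 1)) (hab : b 0 + b 1 ≤ a 0 + a 1)
    (hmin : min (a 0) (a 1) ≤ min (b 0) (b 1)) :
    ∃ W, IsSubstochasticTransfer W a b ∧
      max (a 0) (a 1) * coherenceFactor W ^ 2 = b 0 + b 1 - min (a 0) (a 1) := by
  have hb : ∀ i, min (a 0) (a 1) ≤ b i := Fin.forall_fin_two.mpr (le_min_iff.mp hmin)
  rcases le_total (a 1) (a 0) with h | h
  · rw [min_eq_right h] at hb ⊢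
    rw [max_eq_left h] at ha_pos ⊢
    exact exists_isSubstochasticTransfer_mul_eq_sub ha_pos (ha 1) hab hb
  · rw [min_eq_left h] at hb ⊢
    rw [max_eq_right h] at ha_pos ⊢
    obtain ⟨W, hW, hF⟩ := exists_isSubstochasticTransfer_mul_eq_sub (a := a ∘ Equiv.swap 0 1)
      ha_pos (ha 0) (hab.trans_eq (add_comm _ _)) hb
    have hW' := hW.submatrix (Equiv.swap 0 1)
    rw [Function.comp_assoc, ← Equiv.coe_trans, Equiv.swap_swap] at hW'
    exact ⟨_, hW', by rw [coherenceFactor_submatrix_swap]; exact hF⟩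

end Attainment

theorem exists_isSubstochasticTransfer_le_mul_iff {a b : Fin 2 → ℝ} {κ δ : ℝ} (hκ : 0 ≤ κ)
    (ha : ∀ i, 0 ≤ a i) (hb : ∀ i, 0 ≤ b i) (hb_pos : 0 < b 0 + b 1)
    (hab : b 0 + b 1 ≤ a 0 + a 1) :
    (∃ W, IsSubstochasticTransfer W a b ∧ δ ≤ κ * coherenceFactor W ^ 2) ↔
      a 0 * a 1 * δ ≤ κ * (b 0 * b 1) ∧
        (b 0 + b 1 ≤ 2 * min (a 0) (a 1) ∨
          max (a 0) (a 1) * δ ≤ κ * (b 0 + b 1 - min (a 0) (a 1))) := by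
  constructor
  · rintro ⟨W, hW, hδ⟩
    have scale {k β : ℝ} (hk : 0 ≤ k) (hβ : k * coherenceFactor W ^ 2 ≤ β) : k * δ ≤ κ * β :=
      calc k * δ ≤ k * (κ * coherenceFactor W ^ 2) := mul_le_mul_of_nonneg_left hδ hk
        _ = κ * (k * coherenceFactor W ^ 2) := mul_left_comm _ _ _
        _ ≤ κ * β := mul_le_mul_of_nonneg_left hβ hκ
    refine ⟨scale (mul_nonneg (ha 0) (ha 1)) hW.mul_coherenceFactor_sq_le_mul,
      or_iff_not_imp_left.mpr fun h => scale (le_max_of_le_left (ha 0)) ?_⟩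
    exact hW.max_mul_coherenceFactor_sq_le_sub_min ha (not_le.mp h).le
  · rintro ⟨hellipsoid, hcylinder⟩
    have unscale {k β F : ℝ} (hk : 0 < k) (hF : k * F = β) (hδ : k * δ ≤ κ * β) :
        δ ≤ κ * F := by
      rw [← hF, mul_left_comm] at hδ
      exact le_of_mul_le_mul_left hδ hk
    have of_min_le (ha_pos : 0 < min (a 0) (a 1)) (hmin : min (b 0) (b 1) ≤ min (a 0) (a 1)) :
        ∃ W, IsSubstochasticTransfer W a b ∧ δ ≤ κ * coherenceFactor W ^ 2 := by
      obtain ⟨ha₀, ha₁⟩ := lt_min_iff.mp ha_pos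
      obtain ⟨W, hW, hF⟩ := exists_isSubstochasticTransfer_mul_eq_mul
        (Fin.forall_fin_two.mpr ⟨ha₀, ha₁⟩) hb hab hmin
      exact ⟨W, hW, unscale (mul_pos ha₀ ha₁) hF hellipsoid⟩
    rcases hcylinder with hp | hcylinder
    · exact of_min_le (by linarith)
        (by linarith [min_le_left (b 0) (b 1), min_le_right (b 0) (b 1)])
    · rcases lt_or_ge (min (b 0) (b 1)) (min (a 0) (a 1)) with hmin | hmin
      · exact of_min_le ((le_min (hb 0) (hb 1)).trans_lt hmin) hmin.le
      · have ha_pos : 0 < max (a 0) (a 1) := by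
          linarith [le_max_left (a 0) (a 1), le_max_right (a 0) (a 1)]
        obtain ⟨W, hW, hF⟩ :=
          exists_isSubstochasticTransfer_max_mul_eq_sub_min ha ha_pos hab hmin
        exact ⟨W, hW, unscale ha_pos hF hcylinder⟩

theorem isSIOReachable_hermitianQubit_iff {a b : Fin 2 → ℝ} {c d : ℂ}
    (ha : ∀ i, 0 ≤ a i) (hb : ∀ i, 0 ≤ b i) (hb_pos : 0 < b 0 + b 1)
    (hab : b 0 + b 1 ≤ a 0 + a 1) :
    IsSIOReachable (hermitianQubit a c) (hermitianQubit b d) ↔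
      a 0 * a 1 * ‖d‖ ^ 2 ≤ ‖c‖ ^ 2 * (b 0 * b 1) ∧
        (b 0 + b 1 ≤ 2 * min (a 0) (a 1) ∨
          max (a 0) (a 1) * ‖d‖ ^ 2 ≤ ‖c‖ ^ 2 * (b 0 + b 1 - min (a 0) (a 1))) :=
  isSIOReachable_hermitianQubit_iff_exists_transfer.trans
    (exists_isSubstochasticTransfer_le_mul_iff (sq_nonneg ‖c‖) ha hb hb_pos hab)

section Bloch

/-- The populations of the qubit states whose Bloch vector has third component `z`. -/
noncomputable def blochPopulations (z : ℝ) : Fin 2 → ℝ :=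
  ![(1 + z) / 2, (1 - z) / 2]

/-- The coherence of the qubit states whose Bloch vector has first two components `x` and `y`. -/
noncomputable def blochCoherence (x y : ℝ) : ℂ :=
  (x + y * Complex.I) / 2

theorem blochState_eq_hermitianQubit (x y z : ℝ) :
    blochState x y z = hermitianQubit (blochPopulations z) (blochCoherence x y) := by
  ext i j
  fin_cases i <;> fin_cases j <;>
    simp [blochState, hermitianQubit, blochPopulations, blochCoherence, sub_eq_add_neg]

theorem smul_hermitianQubit (p : ℝ) (a : Fin 2 → ℝ) (c : ℂ) :
    (p : ℂ) • hermitianQubit a c = hermitianQubit (p • a) (p • c) := by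
  ext i j
  fin_cases i <;> fin_cases j <;> simp [hermitianQubit]

theorem norm_blochCoherence_sq (x y : ℝ) : ‖blochCoherence x y‖ ^ 2 = (x ^ 2 + y ^ 2) / 4 := by
  rw [blochCoherence, norm_div, div_pow, Complex.norm_add_mul_I, Real.sq_sqrt (by positivity)]
  norm_num

theorem blochPopulations_nonneg {z : ℝ} (hz : z ^ 2 ≤ 1) (i : Fin 2) :
    0 ≤ blochPopulations z i := by
  obtain ⟨hz₀, hz₁⟩ := abs_le.mp ((sq_le_one_iff_abs_le_one z).mp hz)
  fin_cases i
  · exact div_nonneg (by linarith) zero_le_two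
  · exact div_nonneg (by linarith) zero_le_two

theorem blochPopulations_add (z : ℝ) : blochPopulations z 0 + blochPopulations z 1 = 1 := by
  simp only [blochPopulations, cons_val_zero, cons_val_one]
  ring

theorem blochPopulations_mul (z : ℝ) :
    blochPopulations z 0 * blochPopulations z 1 = (1 - z ^ 2) / 4 := by
  simp only [blochPopulations, cons_val_zero, cons_val_one]
  ring

theorem max_blochPopulations (z : ℝ) :
    max (blochPopulations z 0) (blochPopulations z 1) = (1 + |z|) / 2 := by
  simp only [blochPopulations, cons_val_zero, cons_val_one]
  rw [max_div_div_right zero_le_two, sub_eq_add_neg, max_add_add_left, abs]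

theorem min_blochPopulations (z : ℝ) :
    min (blochPopulations z 0) (blochPopulations z 1) = (1 - |z|) / 2 := by
  have h := min_add_max (blochPopulations z 0) (blochPopulations z 1)
  rw [max_blochPopulations, blochPopulations_add] at h
  linarith

theorem ellipsoid_blochState_iff {rx ry rz sx sy sz p : ℝ} (hp : 0 < p) :
    blochPopulations rz 0 * blochPopulations rz 1 * ‖p • blochCoherence sx sy‖ ^ 2 ≤
        ‖blochCoherence rx ry‖ ^ 2 *
          ((p • blochPopulations sz) 0 * (p • blochPopulations sz) 1) ↔
      (rx ^ 2 + ry ^ 2) * sz ^ 2 + (1 - rz ^ 2) * (sx ^ 2 + sy ^ 2) ≤ rx ^ 2 + ry ^ 2 := by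
  simp only [Pi.smul_apply, smul_eq_mul]
  rw [norm_smul, mul_pow, Real.norm_eq_abs, sq_abs, norm_blochCoherence_sq,
    norm_blochCoherence_sq, mul_mul_mul_comm p, blochPopulations_mul, blochPopulations_mul]
  constructor
  · intro h
    exact le_of_mul_le_mul_left (by linarith) (pow_pos hp 2)
  · intro h
    linarith [mul_le_mul_of_nonneg_left h (sq_nonneg p)]

theorem cylinder_blochState_iff {rx ry rz sx sy p : ℝ} :
    max (blochPopulations rz 0) (blochPopulations rz 1) * ‖p • blochCoherence sx sy‖ ^ 2 ≤
        ‖blochCoherence rx ry‖ ^ 2 *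
          (p - min (blochPopulations rz 0) (blochPopulations rz 1)) ↔
      p ^ 2 * (sx ^ 2 + sy ^ 2) ≤
        (rx ^ 2 + ry ^ 2) / (1 + |rz|) * (2 * p - (1 - |rz|)) := by
  rw [norm_smul, mul_pow, Real.norm_eq_abs, sq_abs, norm_blochCoherence_sq,
    norm_blochCoherence_sq, max_blochPopulations, min_blochPopulations,
    div_mul_eq_mul_div (rx ^ 2 + ry ^ 2) (1 + |rz|), le_div_iff₀ (by positivity : 0 < 1 + |rz|)]
  constructor <;> intro h <;> linarith

end Bloch

theorem stochastic_sio_qubit_conversion_iff_general {rx ry rz sx sy sz p : ℝ}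
    (hr : rz ^ 2 ≤ 1) (hs : sz ^ 2 ≤ 1) (hp₀ : 0 < p) (hp₁ : p ≤ 1) :
    IsSIOReachable (blochState rx ry rz) ((p : ℂ) • blochState sx sy sz) ↔
      (rx ^ 2 + ry ^ 2) * sz ^ 2 + (1 - rz ^ 2) * (sx ^ 2 + sy ^ 2) ≤ rx ^ 2 + ry ^ 2 ∧
        (p ≤ 1 - |rz| ∨
          p ^ 2 * (sx ^ 2 + sy ^ 2) ≤
            (rx ^ 2 + ry ^ 2) / (1 + |rz|) * (2 * p - (1 - |rz|))) := by
  have hb (i : Fin 2) : 0 ≤ (p • blochPopulations sz) i :=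
    mul_nonneg hp₀.le (blochPopulations_nonneg hs i)
  have hp : (p • blochPopulations sz) 0 + (p • blochPopulations sz) 1 = p := by
    rw [Pi.smul_apply, Pi.smul_apply, ← smul_add, blochPopulations_add, smul_eq_mul, mul_one]
  have hmin : p ≤ 2 * min (blochPopulations rz 0) (blochPopulations rz 1) ↔ p ≤ 1 - |rz| := by
    rw [min_blochPopulations, mul_div_cancel₀ _ two_ne_zero]
  rw [blochState_eq_hermitianQubit, blochState_eq_hermitianQubit, smul_hermitianQubit,
    isSIOReachable_hermitianQubit_iff (blochPopulations_nonneg hr) hb (by rwa [hp])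
      (by rwa [hp, blochPopulations_add]), hp]
  exact and_congr (ellipsoid_blochState_iff hp₀) (or_congr hmin cylinder_blochState_iff)

/-- **Theorem 1 (paper).** A qubit state `σ` with Bloch vector `(sx,sy,sz)` is reachable
from `ρ` with Bloch vector `(rx,ry,rz)` with probability `p` by a stochastic strictly
incoherent operation iff the ellipsoid and cylinder conditions hold. -/
theorem stochastic_sio_qubit_conversion_iff
    (rx ry rz sx sy sz : ℝ)
    (hr : rx ^ 2 + ry ^ 2 + rz ^ 2 ≤ 1) (hs : sx ^ 2 + sy ^ 2 + sz ^ 2 ≤ 1)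
    (p : ℝ) (hp0 : 0 < p) (hp1 : p ≤ 1) :
    (∃ (N : ℕ) (K : Fin N → Matrix (Fin 2) (Fin 2) ℂ),
        (∀ i, IsSIKraus (K i)) ∧
        ((1 : Matrix (Fin 2) (Fin 2) ℂ) - ∑ i, (K i)ᴴ * K i).PosSemidef ∧
        ∑ i, K i * blochState rx ry rz * (K i)ᴴ = (p : ℂ) • blochState sx sy sz) ↔
    ((rx ^ 2 + ry ^ 2) * sz ^ 2 + (1 - rz ^ 2) * (sx ^ 2 + sy ^ 2) ≤ rx ^ 2 + ry ^ 2 ∧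
      (p ≤ 1 - |rz| ∨
        p ^ 2 * (sx ^ 2 + sy ^ 2) ≤
          (rx ^ 2 + ry ^ 2) / (1 + |rz|) * (2 * p - (1 - |rz|)))) :=
  stochastic_sio_qubit_conversion_iff_general (by linarith [sq_nonneg rx, sq_nonneg ry])
    (by linarith [sq_nonneg sx, sq_nonneg sy]) hp0 hp1
end

section
/- Let ρ and σ be qubit density matrices with Bloch vectors (r_x,r_y,r_z) and (s_x,s_y,s_z), write r = √(r_x²+r_y²) > 0 and s = √(s_x²+s_y²) > 0 (both states coherent), and define P = sSup{ p ≥ 0 | ∃ a finite family (K_i) of strictly incoherent 2×2 Kraus operators with ∑_i K_iᴴK_i ⪯ I and ∑_i K_i ρ K_iᴴ = p·σ }. If r²·s_z² + (1−r_z²)·s² > r², then P = 0. Otherwise P = min{ (r²/((1+|r_z|)·s²))·(1 + √(1 − s²·(1−r_z²)/r²)), 1 }, and the supremum is attained by some such family. -/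
open Matrix BigOperators
open scoped Kronecker Classical ComplexOrder

/-!
On a qubit a strictly incoherent Kraus operator is diagonal or antidiagonal, so it acts separately
on populations and coherence. If `α` and `β` are the squared column norms of the whole family
`K i`, the Cauchy–Schwarz inequality bounds the output coherence in two ways: by `√(α β)` times the
input coherence, and by the output populations relative to the input ones. Conversely, these two
bounds suffice: one diagonal and one antidiagonal operator have enough freedom to meet all the
constraints, the phases being matched by unit scalars and the moduli by rotating a pair of vectors
in the plane. For the target `p • σ` with `p ≠ 0` the factor `p` cancels from the second bound,
which thus decides whether any conversion is possible. What remains is to maximise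
`p = α m + β n` over `α, β ∈ [0, 1]` subject to `k p² ≤ α β`, where `m ≥ n` are the populations
of `ρ` and `k = s² / r²`; unless `α = β = 1` is admissible, the optimum has `β = 1` and is the
larger root of a quadratic.
-/

/-- Convertibility of `X` into `Y` by a stochastic strictly incoherent operation. The target is not
normalised: for states `ρ`, `σ`, a conversion of `ρ` into `p • σ` succeeds with probability `p`. -/
def IsSIOConvertible {d : ℕ} (X Y : Matrix (Fin d) (Fin d) ℂ) : Prop :=
  ∃ (N : ℕ) (K : Fin N → Matrix (Fin d) (Fin d) ℂ), (∀ i, IsSIKraus (K i)) ∧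
    ((1 : Matrix (Fin d) (Fin d) ℂ) - ∑ i, (K i)ᴴ * K i).PosSemidef ∧
    ∑ i, K i * X * (K i)ᴴ = Y

/-- The Hermitian `2 × 2` matrix with diagonal `(x, y)` and upper off-diagonal entry `u`; for a
qubit state, `x` and `y` are the populations and `u` is the coherence. -/
def hermitianFinTwo (x y : ℝ) (u : ℂ) : Matrix (Fin 2) (Fin 2) ℂ :=
  !![(x : ℂ), u; star u, (y : ℂ)]

lemma hermitianFinTwo_inj {x y w z : ℝ} {u v : ℂ} :
    hermitianFinTwo x y u = hermitianFinTwo w z v ↔ x = w ∧ y = z ∧ u = v := by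
  refine ⟨fun h ↦ ⟨?_, ?_, ?_⟩, by rintro ⟨rfl, rfl, rfl⟩; rfl⟩
  · simpa [hermitianFinTwo] using congr_fun₂ h 0 0
  · simpa [hermitianFinTwo] using congr_fun₂ h 1 1
  · simpa [hermitianFinTwo] using congr_fun₂ h 0 1

lemma sum_hermitianFinTwo {ι : Type*} (s : Finset ι) (x y : ι → ℝ) (u : ι → ℂ) :
    ∑ i ∈ s, hermitianFinTwo (x i) (y i) (u i) =
      hermitianFinTwo (∑ i ∈ s, x i) (∑ i ∈ s, y i) (∑ i ∈ s, u i) := by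
  ext i j
  fin_cases i <;> fin_cases j <;> simp [hermitianFinTwo, Matrix.sum_apply]

lemma smul_hermitianFinTwo (p x y : ℝ) (u : ℂ) :
    (p : ℂ) • hermitianFinTwo x y u = hermitianFinTwo (p * x) (p * y) (p * u) := by
  simp [hermitianFinTwo]

lemma blochState_eq_hermitianFinTwo (rx ry rz : ℝ) :
    blochState rx ry rz =
      hermitianFinTwo ((1 + rz) / 2) ((1 - rz) / 2) ((rx - ry * Complex.I) / 2) := by
  simp [blochState, hermitianFinTwo]

lemma isSIKraus_fin_two_iff {K : Matrix (Fin 2) (Fin 2) ℂ} :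
    IsSIKraus K ↔ K 0 1 = 0 ∧ K 1 0 = 0 ∨ K 0 0 = 0 ∧ K 1 1 = 0 := by
  simp only [IsSIKraus, Fin.forall_fin_two]
  grind

namespace IsSIKraus

lemma conjTranspose_mul_self {d : ℕ} {K : Matrix (Fin d) (Fin d) ℂ} (hK : IsSIKraus K) :
    Kᴴ * K = diagonal fun j ↦ ((∑ i, ‖K i j‖ ^ 2 : ℝ) : ℂ) := by
  ext j k
  rw [mul_apply, diagonal_apply]
  split_ifs with hjk
  · subst hjk
    push_cast
    exact Finset.sum_congr rfl fun i _ ↦ RCLike.conj_mul (K i j)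
  · refine Finset.sum_eq_zero fun i _ ↦ ?_
    by_contra h
    rw [conjTranspose_apply, mul_eq_zero, star_eq_zero, not_or] at h
    exact hjk (hK.1 i j k h.1 h.2)

lemma posSemidef_one_sub_sum_iff {ι : Type*} [Fintype ι] {d : ℕ}
    {K : ι → Matrix (Fin d) (Fin d) ℂ} (hK : ∀ i, IsSIKraus (K i)) :
    ((1 : Matrix (Fin d) (Fin d) ℂ) - ∑ i, (K i)ᴴ * K i).PosSemidef ↔
      ∀ k, ∑ i, ∑ j, ‖K i j k‖ ^ 2 ≤ 1 := by
  have h : (1 : Matrix (Fin d) (Fin d) ℂ) - ∑ i, (K i)ᴴ * K i =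
      diagonal fun k ↦ ((1 - ∑ i, ∑ j, ‖K i j k‖ ^ 2 : ℝ) : ℂ) := by
    ext k l
    rcases eq_or_ne k l with rfl | hkl <;>
      simp [(hK _).conjTranspose_mul_self, Matrix.sum_apply, *]
  rw [h, posSemidef_diagonal_iff]
  simp only [Complex.zero_le_real, sub_nonneg]

lemma mul_hermitianFinTwo_mul_conjTranspose {K : Matrix (Fin 2) (Fin 2) ℂ} (hK : IsSIKraus K)
    (x y : ℝ) (u : ℂ) :
    K * hermitianFinTwo x y u * Kᴴ =
      hermitianFinTwo (‖K 0 0‖ ^ 2 * x + ‖K 0 1‖ ^ 2 * y) (‖K 1 0‖ ^ 2 * x + ‖K 1 1‖ ^ 2 * y)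
        (K 0 0 * u * star (K 1 1) + K 0 1 * star u * star (K 1 0)) := by
  have h (k : ℂ) : (‖k‖ : ℂ) ^ 2 = k * star k := (RCLike.mul_conj k).symm
  ext i j
  rcases isSIKraus_fin_two_iff.1 hK with ⟨h₁, h₂⟩ | ⟨h₁, h₂⟩ <;> fin_cases i <;> fin_cases j <;>
    simp [hermitianFinTwo, mul_apply, Fin.sum_univ_two, h, h₁, h₂] <;> ring

lemma sum_mul_hermitianFinTwo_eq_iff {ι : Type*} [Fintype ι] {K : ι → Matrix (Fin 2) (Fin 2) ℂ}
    (hK : ∀ i, IsSIKraus (K i)) {x y w z : ℝ} {u v : ℂ} :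
    ∑ i, K i * hermitianFinTwo x y u * (K i)ᴴ = hermitianFinTwo w z v ↔
      ∑ i, (‖K i 0 0‖ ^ 2 * x + ‖K i 0 1‖ ^ 2 * y) = w ∧
      ∑ i, (‖K i 1 0‖ ^ 2 * x + ‖K i 1 1‖ ^ 2 * y) = z ∧
      ∑ i, (K i 0 0 * u * star (K i 1 1) + K i 0 1 * star u * star (K i 1 0)) = v := by
  simp only [(hK _).mul_hermitianFinTwo_mul_conjTranspose, sum_hermitianFinTwo,
    hermitianFinTwo_inj]

end IsSIKraus

theorem IsSIOConvertible.exists_weights {x y w z : ℝ} {u v : ℂ} (hx : 0 ≤ x) (hy : 0 ≤ y)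
    (h : IsSIOConvertible (hermitianFinTwo x y u) (hermitianFinTwo w z v)) :
    ∃ α ∈ Set.Icc (0 : ℝ) 1, ∃ β ∈ Set.Icc (0 : ℝ) 1, α * x + β * y = w + z ∧
      ‖v‖ ^ 2 ≤ ‖u‖ ^ 2 * (α * β) ∧ x * y * ‖v‖ ^ 2 ≤ ‖u‖ ^ 2 * (w * z) := by
  obtain ⟨N, K, hK, hsub, hsum⟩ := h
  rw [IsSIKraus.posSemidef_one_sub_sum_iff hK, Fin.forall_fin_two] at hsub
  simp only [Fin.sum_univ_two] at hsub
  obtain ⟨hw, hz, hv⟩ := (IsSIKraus.sum_mul_hermitianFinTwo_eq_iff hK).1 hsum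
  set t : Fin N → ℝ := fun i ↦ ‖K i 0 0‖ * ‖K i 1 1‖ + ‖K i 0 1‖ * ‖K i 1 0‖ with ht
  have hvt : ‖v‖ ^ 2 ≤ ‖u‖ ^ 2 * (∑ i, t i) ^ 2 := by
    rw [← mul_pow, ← hv, Finset.mul_sum]
    gcongr
    refine norm_sum_le_of_le _ fun i _ ↦ (norm_add_le _ _).trans_eq ?_
    simp only [norm_mul, norm_star, ht]
    ring
  have htr : (∑ i, t i) ^ 2 ≤
      (∑ i, (‖K i 0 0‖ ^ 2 + ‖K i 1 0‖ ^ 2)) * ∑ i, (‖K i 0 1‖ ^ 2 + ‖K i 1 1‖ ^ 2) :=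
    Finset.sum_sq_le_sum_mul_sum_of_sq_le_mul _ (fun i _ ↦ by positivity)
      (fun i _ ↦ by positivity) fun i _ ↦ by
        linarith [sq_nonneg (‖K i 0 0‖ * ‖K i 0 1‖ - ‖K i 1 0‖ * ‖K i 1 1‖)]
  have hdet : x * y * (∑ i, t i) ^ 2 ≤ w * z := by
    rw [← Real.sq_sqrt (mul_nonneg hx hy), ← mul_pow, Finset.mul_sum, ← hw, ← hz]
    refine Finset.sum_sq_le_sum_mul_sum_of_sq_le_mul _ (fun i _ ↦ by positivity)
      (fun i _ ↦ by positivity) fun i _ ↦ ?_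
    rw [mul_pow, Real.sq_sqrt (mul_nonneg hx hy)]
    linarith [sq_nonneg (‖K i 0 0‖ * ‖K i 1 0‖ * x - ‖K i 0 1‖ * ‖K i 1 1‖ * y)]
  refine ⟨_, ⟨by positivity, hsub.1⟩, _, ⟨by positivity, hsub.2⟩, ?_, ?_, ?_⟩
  · rw [← hw, ← hz]
    simp only [Finset.sum_mul, ← Finset.sum_add_distrib]
    exact Finset.sum_congr rfl fun i _ ↦ by ring
  · exact hvt.trans (by gcongr)
  · calc x * y * ‖v‖ ^ 2 ≤ x * y * (‖u‖ ^ 2 * (∑ i, t i) ^ 2) := by gcongr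
      _ = ‖u‖ ^ 2 * (x * y * (∑ i, t i) ^ 2) := by ring
      _ ≤ ‖u‖ ^ 2 * (w * z) := by gcongr

lemma exists_mul_cos_add_mul_sin_eq {a b t : ℝ} (h : t ^ 2 ≤ a ^ 2 + b ^ 2) :
    ∃ θ : ℝ, a * Real.cos θ + b * Real.sin θ = t := by
  let ζ : ℂ := ⟨a, b⟩
  have hζ : ‖ζ‖ ^ 2 = a ^ 2 + b ^ 2 := by
    rw [Complex.sq_norm, Complex.normSq_mk]
    ring
  have ht : |t| ≤ ‖ζ‖ := abs_le_of_sq_le_sq (h.trans_eq hζ.symm) (norm_nonneg ζ)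
  have hdiv : |t / ‖ζ‖| ≤ 1 := by
    rw [abs_div, abs_norm]
    exact div_le_one_of_le₀ ht (norm_nonneg ζ)
  have hcancel : ‖ζ‖ * (t / ‖ζ‖) = t := mul_div_cancel_of_imp' fun h₀ ↦ by
    rwa [h₀, abs_nonpos_iff] at ht
  have ha : a = ‖ζ‖ * Real.cos ζ.arg := (Complex.norm_mul_cos_arg ζ).symm
  have hb : b = ‖ζ‖ * Real.sin ζ.arg := (Complex.norm_mul_sin_arg ζ).symm
  obtain ⟨θ, hθ⟩ : ∃ θ, θ - ζ.arg = Real.arccos (t / ‖ζ‖) := ⟨_, add_sub_cancel_right _ ζ.arg⟩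
  refine ⟨θ, ?_⟩
  calc a * Real.cos θ + b * Real.sin θ = ‖ζ‖ * Real.cos (θ - ζ.arg) := by
        rw [Real.cos_sub]
        linear_combination Real.cos θ * ha + Real.sin θ * hb
    _ = t := by rw [hθ, Real.cos_arccos (abs_le.1 hdiv).1 (abs_le.1 hdiv).2, hcancel]

lemma exists_vectors_of_gram {α β g : ℝ} (hα : 0 ≤ α) (hβ : 0 ≤ β) (hg : g ^ 2 ≤ α * β) :
    ∃ l e f : ℝ, l ^ 2 = α ∧ e ^ 2 + f ^ 2 = β ∧ l * e = g := by
  have hproj : g ^ 2 / α ≤ β := div_le_of_le_mul₀ hα hβ (by linarith)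
  refine ⟨√α, g / √α, √(β - g ^ 2 / α), Real.sq_sqrt hα, ?_, mul_div_cancel_of_imp' fun h₀ ↦ ?_⟩
  · rw [div_pow, Real.sq_sqrt hα, Real.sq_sqrt (sub_nonneg.2 hproj)]
    ring
  · rw [Real.sqrt_eq_zero hα] at h₀
    simpa [h₀, sq_nonpos_iff] using hg

-- Rotating the pair of vectors `(a, d)`, `(b, c)` preserves its Gram matrix, while `a² x + c² y`
-- sweeps the interval between the roots `w` of `w (α x + β y - w) = x y g²`.
lemma exists_amplitudes {x y w z α β g : ℝ} (hα : 0 ≤ α) (hβ : 0 ≤ β) (hg : g ^ 2 ≤ α * β)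
    (htr : α * x + β * y = w + z) (hdet : x * y * g ^ 2 ≤ w * z) :
    ∃ a b c d : ℝ, a ^ 2 + d ^ 2 = α ∧ b ^ 2 + c ^ 2 = β ∧ a * b + c * d = g ∧
      a ^ 2 * x + c ^ 2 * y = w ∧ d ^ 2 * x + b ^ 2 * y = z := by
  obtain ⟨l, e, f, rfl, rfl, rfl⟩ := exists_vectors_of_gram hα hβ hg
  obtain ⟨θ, hθ⟩ : ∃ θ, (l ^ 2 * x + (f ^ 2 - e ^ 2) * y) * Real.cos θ +
      2 * e * f * y * Real.sin θ = w - z := by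
    apply exists_mul_cos_add_mul_sin_eq
    have hsq := congrArg (· ^ 2) htr
    linarith
  obtain ⟨φ, rfl⟩ : ∃ φ, 2 * φ = θ := ⟨θ / 2, by ring⟩
  rw [Real.cos_two_mul, Real.sin_two_mul] at hθ
  have hone := Real.sin_sq_add_cos_sq φ
  refine ⟨l * Real.cos φ, e * Real.cos φ - f * Real.sin φ, e * Real.sin φ + f * Real.cos φ,
    l * Real.sin φ, ?_, ?_, ?_, ?_, ?_⟩
  · linear_combination l ^ 2 * hone
  · linear_combination (e ^ 2 + f ^ 2) * hone
  · linear_combination e * l * hone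
  · linear_combination hθ / 2 + htr / 2 + e ^ 2 * y * hone
  · linear_combination htr / 2 - hθ / 2 + (l ^ 2 * x + f ^ 2 * y) * hone

lemma exists_phases_mul_eq {u v : ℂ} {g : ℝ} (h : g * ‖u‖ = ‖v‖) :
    ∃ ε δ : ℂ, ‖ε‖ = 1 ∧ ‖δ‖ = 1 ∧ δ * star u = ε * u ∧ g * (ε * u) = v := by
  obtain ⟨c, hc, hcu : (‖u‖ : ℂ) = c * u⟩ := RCLike.exists_norm_eq_mul_self u
  obtain ⟨c', hc', hcv : c' * (‖v‖ : ℂ) = v⟩ := RCLike.exists_norm_mul_eq_self v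
  have hcu' : star c * star u = c * u := by
    rw [mul_comm, ← star_mul, ← hcu]
    exact Complex.conj_ofReal _
  refine ⟨c' * c, c' * star c, by rw [norm_mul, hc, hc', mul_one],
    by rw [norm_mul, norm_star, hc, hc', mul_one], by rw [mul_assoc, mul_assoc, hcu'], ?_⟩
  calc (g : ℂ) * (c' * c * u) = c' * (g * (c * u)) := by ring
    _ = c' * ‖v‖ := by rw [← hcu, ← Complex.ofReal_mul, h]
    _ = v := hcv

theorem isSIOConvertible_of_weights {x y w z α β : ℝ} {u v : ℂ} (hu : u ≠ 0)
    (hα : α ∈ Set.Icc (0 : ℝ) 1) (hβ : β ∈ Set.Icc (0 : ℝ) 1) (htr : α * x + β * y = w + z)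
    (hoff : ‖v‖ ^ 2 ≤ ‖u‖ ^ 2 * (α * β)) (hdet : x * y * ‖v‖ ^ 2 ≤ ‖u‖ ^ 2 * (w * z)) :
    IsSIOConvertible (hermitianFinTwo x y u) (hermitianFinTwo w z v) := by
  have hu₀ : 0 < ‖u‖ := norm_pos_iff.2 hu
  obtain ⟨g, hg⟩ : ∃ g : ℝ, g * ‖u‖ = ‖v‖ := ⟨‖v‖ / ‖u‖, div_mul_cancel₀ _ hu₀.ne'⟩
  rw [← hg] at hoff hdet
  obtain ⟨a, b, c, d, had, hbc, habcd, hw, hz⟩ := exists_amplitudes (g := g) hα.1 hβ.1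
    (le_of_mul_le_mul_left (by linarith) (sq_pos_of_pos hu₀)) htr
    (le_of_mul_le_mul_left (by linarith) (sq_pos_of_pos hu₀))
  obtain ⟨ε, δ, hε, hδ, hδε, hεv⟩ := exists_phases_mul_eq hg
  let K : Fin 2 → Matrix (Fin 2) (Fin 2) ℂ := ![!![a * ε, 0; 0, b], !![0, c * δ; d, 0]]
  have hK : ∀ i, IsSIKraus (K i) := by
    simp [Fin.forall_fin_two, isSIKraus_fin_two_iff, K]
  refine ⟨2, K, hK, (IsSIKraus.posSemidef_one_sub_sum_iff hK).2 ?_,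
    (IsSIKraus.sum_mul_hermitianFinTwo_eq_iff hK).2 ⟨?_, ?_, ?_⟩⟩
  · simp [Fin.forall_fin_two, Fin.sum_univ_two, K, hε, hδ, had, hα.2, add_comm (c ^ 2), hbc, hβ.2]
  · simp [Fin.sum_univ_two, K, hε, hδ, hw]
  · simp [Fin.sum_univ_two, K, add_comm (b ^ 2 * y), hz]
  · have hoff : (a : ℂ) * ε * u * b + c * δ * star u * d = v := by
      calc (a : ℂ) * ε * u * b + c * δ * star u * d = a * b * (ε * u) + c * d * (δ * star u) := by
            ring
        _ = ((a * b + c * d : ℝ) : ℂ) * (ε * u) := by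
            rw [hδε]
            push_cast
            ring
        _ = v := by rw [habcd, hεv]
    simpa [Fin.sum_univ_two, K] using hoff

theorem isSIOConvertible_hermitianFinTwo_iff {x y w z : ℝ} {u v : ℂ} (hx : 0 ≤ x) (hy : 0 ≤ y)
    (hu : u ≠ 0) :
    IsSIOConvertible (hermitianFinTwo x y u) (hermitianFinTwo w z v) ↔
      ∃ α ∈ Set.Icc (0 : ℝ) 1, ∃ β ∈ Set.Icc (0 : ℝ) 1, α * x + β * y = w + z ∧
        ‖v‖ ^ 2 ≤ ‖u‖ ^ 2 * (α * β) ∧ x * y * ‖v‖ ^ 2 ≤ ‖u‖ ^ 2 * (w * z) :=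
  ⟨fun h ↦ h.exists_weights hx hy,
    fun ⟨_, hα, _, hβ, htr, hoff, hdet⟩ ↦ isSIOConvertible_of_weights hu hα hβ htr hoff hdet⟩

/-- Total weights `α m + β n` that remain when populations `m`, `n` are damped by factors `α`, `β`,
subject to the bound `k p² ≤ α β` on the coherence of an output of weight `p`; here `k` is the
squared ratio of the target coherence (at `p = 1`) to the initial one. -/
def retainedWeights (m n k : ℝ) : Set ℝ :=
  {p | ∃ α ∈ Set.Icc (0 : ℝ) 1, ∃ β ∈ Set.Icc (0 : ℝ) 1,
    α * m + β * n = p ∧ k * p ^ 2 ≤ α * β}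

lemma retainedWeights_comm (m n k : ℝ) : retainedWeights m n k = retainedWeights n m k := by
  have h (m n : ℝ) : retainedWeights m n k ⊆ retainedWeights n m k :=
    fun p ⟨α, hα, β, hβ, hp, hk⟩ ↦ ⟨β, hβ, α, hα, by rwa [add_comm], by rwa [mul_comm β]⟩
  exact (h m n).antisymm (h n m)

lemma zero_mem_retainedWeights (m n k : ℝ) : 0 ∈ retainedWeights m n k :=
  ⟨0, by simp, 0, by simp, by simp, by simp⟩

lemma nonneg_of_mem_retainedWeights {m n k p : ℝ} (hm : 0 ≤ m) (hn : 0 ≤ n)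
    (hp : p ∈ retainedWeights m n k) : 0 ≤ p := by
  obtain ⟨α, hα, β, hβ, rfl, -⟩ := hp
  exact add_nonneg (mul_nonneg hα.1 hm) (mul_nonneg hβ.1 hn)

/-- The larger root of `m k p² - p + n`, the polynomial obtained from the coherence constraint of
`retainedWeights m n k` at `β = 1`. -/
noncomputable def coherenceRoot (m n k : ℝ) : ℝ :=
  (1 + √(1 - 4 * m * n * k)) / (2 * m * k)

section coherenceRoot

variable {m n k : ℝ}

lemma two_mul_mul_coherenceRoot (hm : 0 < m) (hk : 0 < k) :
    2 * m * k * coherenceRoot m n k = 1 + √(1 - 4 * m * n * k) :=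
  mul_div_cancel₀ _ (by positivity)

lemma coherenceRoot_pos (hm : 0 < m) (hk : 0 < k) : 0 < coherenceRoot m n k := by
  unfold coherenceRoot
  positivity

lemma mul_mul_coherenceRoot_sq (hm : 0 < m) (hk : 0 < k) (hdisc : 4 * m * n * k ≤ 1) :
    m * (k * coherenceRoot m n k ^ 2) = coherenceRoot m n k - n := by
  have hsq := Real.sq_sqrt (sub_nonneg.2 hdisc)
  rw [← sub_eq_of_eq_add' (two_mul_mul_coherenceRoot hm hk)] at hsq
  have hmk : 4 * m * k ≠ 0 := by positivity
  exact mul_left_cancel₀ hmk (by linear_combination hsq)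

lemma two_mul_le_coherenceRoot (hm : 0 < m) (hk : 0 < k) (hdisc : 4 * m * n * k ≤ 1) :
    2 * n ≤ coherenceRoot m n k := by
  rw [coherenceRoot, le_div_iff₀ (by positivity)]
  linarith [Real.sqrt_nonneg (1 - 4 * m * n * k)]

lemma le_coherenceRoot_of_quadratic_nonpos {p : ℝ} (hm : 0 < m) (hk : 0 < k)
    (hp : m * (k * p ^ 2) ≤ p - n) : p ≤ coherenceRoot m n k := by
  rw [coherenceRoot, le_div_iff₀ (by positivity), ← sub_le_iff_le_add']
  apply Real.le_sqrt_of_sq_le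
  linarith [mul_le_mul_of_nonneg_left hp (by positivity : 0 ≤ 4 * m * k)]

lemma le_coherenceRoot_of_mem_retainedWeights {p : ℝ} (hm : 0 < m) (hn : 0 ≤ n) (hk : 0 < k)
    (hdisc : 4 * m * n * k ≤ 1) (hp : p ∈ retainedWeights m n k) : p ≤ coherenceRoot m n k := by
  rcases le_total p (2 * n) with hsmall | hlarge
  · exact hsmall.trans (two_mul_le_coherenceRoot hm hk hdisc)
  obtain ⟨α, -, β, hβ, hp, hcoh⟩ := hp
  apply le_coherenceRoot_of_quadratic_nonpos hm hk
  have hgap : 0 ≤ (1 - β) * (p - n * (1 + β)) :=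
    mul_nonneg (sub_nonneg.2 hβ.2) (by linarith [mul_le_mul_of_nonneg_left hβ.2 hn])
  calc m * (k * p ^ 2) ≤ m * (α * β) := by gcongr
    _ = β * (p - β * n) := by rw [← hp]; ring
    _ ≤ p - n := by linarith

lemma coherenceRoot_mem_retainedWeights (hm : 0 < m) (hk : 0 < k) (hdisc : 4 * m * n * k ≤ 1)
    (hle : coherenceRoot m n k ≤ m + n) : coherenceRoot m n k ∈ retainedWeights m n k := by
  have hroot := mul_mul_coherenceRoot_sq hm hk hdisc
  refine ⟨k * coherenceRoot m n k ^ 2, ⟨by positivity, ?_⟩, 1, by simp, by linarith, by simp⟩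
  exact le_of_mul_le_mul_left (by linarith) hm

lemma add_mem_retainedWeights (hm : 0 < m) (hn : 0 ≤ n) (hnm : n ≤ m) (hk : 0 < k)
    (hdisc : 4 * m * n * k ≤ 1) (hle : m + n ≤ coherenceRoot m n k) :
    m + n ∈ retainedWeights m n k := by
  refine ⟨1, by simp, 1, by simp, by simp, ?_⟩
  have hroot := mul_mul_coherenceRoot_sq hm hk hdisc
  set q := coherenceRoot m n k
  have hq : 0 < q := by linarith
  have hfactor : 0 ≤ (q - (m + n)) * (m * q - n * (m + n)) :=
    mul_nonneg (by linarith) (sub_nonneg.2 (by gcongr))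
  refine le_of_mul_le_mul_left (a := m * q ^ 2) ?_ (by positivity)
  calc m * q ^ 2 * (k * (m + n) ^ 2) = (m + n) ^ 2 * (m * (k * q ^ 2)) := by ring
    _ = (m + n) ^ 2 * (q - n) := by rw [hroot]
    _ ≤ m * q ^ 2 * (1 * 1) := by linarith

theorem isGreatest_retainedWeights (hm : 0 < m) (hn : 0 ≤ n) (hnm : n ≤ m) (hk : 0 < k)
    (hdisc : 4 * m * n * k ≤ 1) :
    IsGreatest (retainedWeights m n k) (min (coherenceRoot m n k) (m + n)) := by
  refine ⟨?_, fun p hp ↦ le_min (le_coherenceRoot_of_mem_retainedWeights hm hn hk hdisc hp) ?_⟩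
  · rcases le_total (coherenceRoot m n k) (m + n) with hle | hle
    · rw [min_eq_left hle]
      exact coherenceRoot_mem_retainedWeights hm hk hdisc hle
    · rw [min_eq_right hle]
      exact add_mem_retainedWeights hm hn hnm hk hdisc hle
  · obtain ⟨α, hα, β, hβ, rfl, -⟩ := hp
    exact add_le_add (mul_le_of_le_one_left hm.le hα.2) (mul_le_of_le_one_left hn hβ.2)

end coherenceRoot

theorem isSIOConvertible_smul_hermitianFinTwo_iff {x y w z p : ℝ} {u v : ℂ} (hx : 0 ≤ x)
    (hy : 0 ≤ y) (hu : u ≠ 0) (hwz : w + z = 1) :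
    IsSIOConvertible (hermitianFinTwo x y u) ((p : ℂ) • hermitianFinTwo w z v) ↔
      p ∈ retainedWeights x y (‖v‖ ^ 2 / ‖u‖ ^ 2) ∧
        (p = 0 ∨ x * y * ‖v‖ ^ 2 ≤ ‖u‖ ^ 2 * (w * z)) := by
  have hu₀ : 0 < ‖u‖ ^ 2 := sq_pos_of_pos (norm_pos_iff.2 hu)
  have hnorm : ‖(p : ℂ) * v‖ ^ 2 = p ^ 2 * ‖v‖ ^ 2 := by
    rw [norm_mul, mul_pow, Complex.norm_real, Real.norm_eq_abs, sq_abs]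
  have hcoh (t : ℝ) : p ^ 2 * ‖v‖ ^ 2 ≤ ‖u‖ ^ 2 * t ↔ ‖v‖ ^ 2 / ‖u‖ ^ 2 * p ^ 2 ≤ t := by
    rw [div_mul_eq_mul_div, div_le_iff₀' hu₀, mul_comm (p ^ 2)]
  have hdet : x * y * (p ^ 2 * ‖v‖ ^ 2) ≤ ‖u‖ ^ 2 * (p * w * (p * z)) ↔
      p = 0 ∨ x * y * ‖v‖ ^ 2 ≤ ‖u‖ ^ 2 * (w * z) := by
    rcases eq_or_ne p 0 with rfl | hp
    · simp
    · rw [or_iff_right hp, mul_mul_mul_comm p w, ← sq, mul_left_comm (x * y),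
        mul_left_comm (‖u‖ ^ 2), mul_le_mul_iff_right₀ (sq_pos_of_ne_zero hp)]
  rw [smul_hermitianFinTwo, isSIOConvertible_hermitianFinTwo_iff hx hy hu, hnorm, ← mul_add, hwz,
    mul_one]
  simp only [hcoh, hdet, retainedWeights, Set.mem_ofPred_eq]
  grind

lemma norm_sq_blochCoherence (x y : ℝ) :
    ‖((x : ℂ) - y * Complex.I) / 2‖ ^ 2 = (x ^ 2 + y ^ 2) / 4 := by
  rw [norm_div, div_pow, sub_eq_add_neg, ← neg_mul, ← Complex.ofReal_neg, Complex.sq_norm (_ + _),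
    Complex.normSq_add_mul_I, neg_sq]
  norm_num

theorem isSIOConvertible_blochState_iff {rx ry rz sx sy sz p : ℝ} (hrz : |rz| ≤ 1)
    (hrc : 0 < rx ^ 2 + ry ^ 2) :
    IsSIOConvertible (blochState rx ry rz) ((p : ℂ) • blochState sx sy sz) ↔
      p ∈ retainedWeights ((1 + rz) / 2) ((1 - rz) / 2)
          ((sx ^ 2 + sy ^ 2) / (rx ^ 2 + ry ^ 2)) ∧
        (p = 0 ∨ (rx ^ 2 + ry ^ 2) * sz ^ 2 + (1 - rz ^ 2) * (sx ^ 2 + sy ^ 2) ≤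
          rx ^ 2 + ry ^ 2) := by
  obtain ⟨hneg, hpos⟩ := abs_le.1 hrz
  have hu : ((rx : ℂ) - ry * Complex.I) / 2 ≠ 0 := by
    rw [← norm_ne_zero_iff, ← pow_ne_zero_iff two_ne_zero, norm_sq_blochCoherence]
    positivity
  rw [blochState_eq_hermitianFinTwo, blochState_eq_hermitianFinTwo,
    isSIOConvertible_smul_hermitianFinTwo_iff (by linarith) (by linarith) hu (by ring),
    norm_sq_blochCoherence, norm_sq_blochCoherence, div_div_div_cancel_right₀ four_ne_zero]
  refine and_congr_right' (or_congr_right ?_)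
  constructor <;> intro h <;> linarith

lemma retainedWeights_abs (z k : ℝ) :
    retainedWeights ((1 + z) / 2) ((1 - z) / 2) k =
      retainedWeights ((1 + |z|) / 2) ((1 - |z|) / 2) k := by
  rcases abs_choice z with h | h <;> rw [h]
  rw [retainedWeights_comm, sub_neg_eq_add, ← sub_eq_add_neg]

lemma coherenceRoot_abs (z r s : ℝ) :
    coherenceRoot ((1 + |z|) / 2) ((1 - |z|) / 2) (s / r) =
      r / ((1 + |z|) * s) * (1 + √(1 - s * (1 - z ^ 2) / r)) := by
  have hdisc : 4 * ((1 + |z|) / 2) * ((1 - |z|) / 2) * (s / r) = s * (1 - z ^ 2) / r := by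
    rw [← sq_abs z]
    ring
  have hden : 2 * ((1 + |z|) / 2) * (s / r) = ((1 + |z|) * s) / r := by ring
  rw [coherenceRoot, hdisc, hden, div_div_eq_mul_div, div_mul_eq_mul_div, mul_comm r]

theorem isGreatest_retainedWeights_abs {z r s : ℝ} (hz : |z| ≤ 1) (hr : 0 < r) (hs : 0 < s)
    (hdisc : (1 - z ^ 2) * s ≤ r) :
    IsGreatest (retainedWeights ((1 + z) / 2) ((1 - z) / 2) (s / r))
      (min (r / ((1 + |z|) * s) * (1 + √(1 - s * (1 - z ^ 2) / r))) 1) := by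
  have hz₀ := abs_nonneg z
  have hone : (1 + |z|) / 2 + (1 - |z|) / 2 = 1 := by ring
  rw [retainedWeights_abs, ← coherenceRoot_abs]
  nth_rw 5 [← hone]
  refine isGreatest_retainedWeights (by positivity) (by linarith) (by linarith) (by positivity) ?_
  calc 4 * ((1 + |z|) / 2) * ((1 - |z|) / 2) * (s / r) = (1 - z ^ 2) * s / r := by
        rw [← sq_abs z]
        ring
    _ ≤ 1 := (div_le_one hr).2 hdisc

/-- The optimal probability of converting a coherent qubit state `ρ` into a coherent
qubit state `σ` via stochastic (strictly) incoherent operations. -/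
theorem optimal_sio_conversion_probability
    (rx ry rz sx sy sz : ℝ)
    (hr : rx ^ 2 + ry ^ 2 + rz ^ 2 ≤ 1) (hs : sx ^ 2 + sy ^ 2 + sz ^ 2 ≤ 1)
    (hrc : 0 < rx ^ 2 + ry ^ 2) (hsc : 0 < sx ^ 2 + sy ^ 2)
    (S : Set ℝ)
    (hS : S = {p : ℝ | 0 ≤ p ∧
      ∃ (N : ℕ) (K : Fin N → Matrix (Fin 2) (Fin 2) ℂ),
        (∀ i, IsSIKraus (K i)) ∧
        ((1 : Matrix (Fin 2) (Fin 2) ℂ) - ∑ i, (K i)ᴴ * K i).PosSemidef ∧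
        ∑ i, K i * blochState rx ry rz * (K i)ᴴ = (p : ℂ) • blochState sx sy sz}) :
    ((rx ^ 2 + ry ^ 2) * sz ^ 2 + (1 - rz ^ 2) * (sx ^ 2 + sy ^ 2) > rx ^ 2 + ry ^ 2 →
      sSup S = 0) ∧
    ((rx ^ 2 + ry ^ 2) * sz ^ 2 + (1 - rz ^ 2) * (sx ^ 2 + sy ^ 2) ≤ rx ^ 2 + ry ^ 2 →
      sSup S = min ((rx ^ 2 + ry ^ 2) / ((1 + |rz|) * (sx ^ 2 + sy ^ 2)) *
          (1 + Real.sqrt (1 - (sx ^ 2 + sy ^ 2) * (1 - rz ^ 2) / (rx ^ 2 + ry ^ 2)))) 1 ∧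
      sSup S ∈ S) := by
  have hrz : |rz| ≤ 1 := abs_le_one_iff_mul_self_le_one.2 (by linarith)
  have hmem (p : ℝ) : p ∈ S ↔ p ∈ retainedWeights ((1 + rz) / 2) ((1 - rz) / 2)
        ((sx ^ 2 + sy ^ 2) / (rx ^ 2 + ry ^ 2)) ∧
      (p = 0 ∨ (rx ^ 2 + ry ^ 2) * sz ^ 2 + (1 - rz ^ 2) * (sx ^ 2 + sy ^ 2) ≤
        rx ^ 2 + ry ^ 2) := by
    rw [hS, ← isSIOConvertible_blochState_iff hrz hrc]
    refine and_iff_right_of_imp fun h ↦ ?_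
    obtain ⟨hneg, hpos⟩ := abs_le.1 hrz
    exact nonneg_of_mem_retainedWeights (by linarith) (by linarith)
      ((isSIOConvertible_blochState_iff hrz hrc).1 h).1
  refine ⟨fun hgt ↦ ?_, fun hle ↦ ?_⟩
  · have hzero : S = {0} := by
      ext p
      rw [hmem, or_iff_left hgt.not_ge, Set.mem_singleton_iff]
      exact and_iff_right_of_imp fun hp ↦ hp ▸ zero_mem_retainedWeights ..
    rw [hzero, csSup_singleton]
  · have hS' := Set.ext fun p ↦ (hmem p).trans (and_iff_left (Or.inr hle))
    have hmax := isGreatest_retainedWeights_abs hrz hrc hsc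
      (le_of_add_le_of_nonneg_right hle (by positivity))
    rw [← hS'] at hmax
    exact ⟨hmax.csSup_eq, hmax.csSup_eq ▸ hmax.1⟩
end

section
/- Let ρ and σ be qubit density matrices with Bloch vectors (r_x,r_y,r_z) and (s_x,s_y,s_z), and write r = √(r_x²+r_y²), s = √(s_x²+s_y²). There exists a finite family (K_i) of strictly incoherent 2×2 Kraus operators with ∑_i K_iᴴK_i = I and ∑_i K_i ρ K_iᴴ = σ (deterministic incoherent conversion of ρ into σ) if and only if r²·s_z² + (1−r_z²)·s² ≤ r² and s ≤ r. -/
open Matrix BigOperators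
open scoped Kronecker Classical ComplexOrder

/-!
Up to phases, a strictly incoherent qubit operation is described by two angles: the total weights
of the entries `(0, 0)`, `(1, 0)`, `(1, 1)`, `(0, 1)` of its Kraus operators are `cos² α`, `sin² α`,
`cos² β`, `sin² β`, and by Cauchy–Schwarz it multiplies the coherence by at most `cos (α - β)`,
a bound attained by one diagonal and one antidiagonal Kraus operator. The output `z`-component is
`rz * cos (α + β) * cos (α - β) - sin (α + β) * sin (α - β)`. For fixed `f = cos (α - β)` this is a
sinusoid in `α + β` of squared amplitude `1 - (1 - rz²) f²`, so the reachable pairs `(sz, f)` are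
those with `sz² + (1 - rz²) f² ≤ 1`, and it remains to take `f = s / r`.
-/

section Trigonometry

open Real

theorem exists_cos_eq_sqrt_and_sin_eq_sqrt {x y : ℝ} (hx : 0 ≤ x) (hy : 0 ≤ y) (hxy : x + y = 1) :
    ∃ θ, cos θ = √x ∧ sin θ = √y := by
  have hx1 : √x ≤ 1 := sqrt_le_one.2 (by linarith)
  refine ⟨arccos √x, cos_arccos (by linarith [sqrt_nonneg x]) hx1, ?_⟩
  rw [sin_arccos, sq_sqrt hx, ← hxy, add_sub_cancel_left]

theorem exists_mul_cos_add_mul_sin_eq_iff {a b m : ℝ} :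
    (∃ θ, a * cos θ + b * sin θ = m) ↔ m ^ 2 ≤ a ^ 2 + b ^ 2 := by
  constructor
  · rintro ⟨θ, rfl⟩
    have lagrange : a ^ 2 + b ^ 2 - (a * cos θ + b * sin θ) ^ 2 = (a * sin θ - b * cos θ) ^ 2 := by
      linear_combination -(a ^ 2 + b ^ 2) * sin_sq_add_cos_sq θ
    linarith [sq_nonneg (a * sin θ - b * cos θ)]
  · intro h
    set z : ℂ := ⟨a, b⟩
    have ha : ‖z‖ * cos z.arg = a := Complex.norm_mul_cos_arg z
    have hb : ‖z‖ * sin z.arg = b := Complex.norm_mul_sin_arg z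
    have hm : |m| ≤ ‖z‖ := by
      refine abs_le_of_sq_le_sq (h.trans_eq ?_) (norm_nonneg z)
      rw [← ha, ← hb]
      linear_combination ‖z‖ ^ 2 * sin_sq_add_cos_sq z.arg
    have hmul : ‖z‖ * cos (arccos (m / ‖z‖)) = m := by
      have hquot : |m / ‖z‖| ≤ 1 := by
        rw [abs_div, abs_norm]
        exact div_le_one_of_le₀ hm (norm_nonneg z)
      rw [cos_arccos (abs_le.1 hquot).1 (abs_le.1 hquot).2]
      exact mul_div_cancel_of_imp' fun hz => abs_nonpos_iff.1 (hz ▸ hm)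
    refine ⟨z.arg + arccos (m / ‖z‖), ?_⟩
    rw [cos_add, sin_add, ← ha, ← hb]
    linear_combination
      ‖z‖ * cos (arccos (m / ‖z‖)) * sin_sq_add_cos_sq z.arg + hmul

theorem cos_sq_mul_add_sin_sq_mul_eq (z α β : ℝ) :
    cos α ^ 2 * (1 + z) + sin β ^ 2 * (1 - z) =
      1 + (z * cos (α - β) * cos (α + β) + -sin (α - β) * sin (α + β)) := by
  rw [cos_sub, cos_add, sin_sub, sin_add]
  linear_combination (cos β ^ 2 + z * sin β ^ 2) * sin_sq_add_cos_sq α +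
    (1 - cos α ^ 2 * (1 + z)) * sin_sq_add_cos_sq β

theorem exists_angles_iff {z m f : ℝ} :
    (∃ α β, cos (α - β) = f ∧ cos α ^ 2 * (1 + z) + sin β ^ 2 * (1 - z) = 1 + m) ↔
      |f| ≤ 1 ∧ m ^ 2 + (1 - z ^ 2) * f ^ 2 ≤ 1 := by
  constructor
  · rintro ⟨α, β, rfl, h⟩
    refine ⟨abs_cos_le_one _, ?_⟩
    rw [cos_sq_mul_add_sin_sq_mul_eq, add_right_inj] at h
    have hm := exists_mul_cos_add_mul_sin_eq_iff.1 ⟨α + β, h⟩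
    linarith [sin_sq_add_cos_sq (α - β)]
  · rintro ⟨hf, h⟩
    obtain ⟨δ, rfl⟩ : ∃ δ, cos δ = f :=
      ⟨arccos f, cos_arccos (abs_le.1 hf).1 (abs_le.1 hf).2⟩
    obtain ⟨θ, hθ⟩ : ∃ θ, z * cos δ * cos θ + -sin δ * sin θ = m :=
      exists_mul_cos_add_mul_sin_eq_iff.2 (by linarith [sin_sq_add_cos_sq δ])
    have hsub : (θ + δ) / 2 - (θ - δ) / 2 = δ := by ring
    have hadd : (θ + δ) / 2 + (θ - δ) / 2 = θ := by ring
    refine ⟨(θ + δ) / 2, (θ - δ) / 2, by rw [hsub], ?_⟩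
    rw [cos_sq_mul_add_sin_sq_mul_eq, hsub, hadd, hθ]

end Trigonometry

section Kraus

variable {ι m n : Type*} [Fintype ι] [Fintype m] [DecidableEq n]

theorem sum_sum_norm_sq_eq_one {𝕜 : Type*} [RCLike 𝕜] {K : ι → Matrix m n 𝕜}
    (hK : ∑ i, (K i)ᴴ * K i = 1) (j : n) : ∑ k, ∑ i, ‖K i k j‖ ^ 2 = 1 := by
  have h : ∑ i, ∑ k, star (K i k j) * K i k j = 1 := by
    simpa only [Matrix.sum_apply, mul_apply, conjTranspose_apply, one_apply_eq] using
      congrFun (congrFun hK j) j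
  rw [Finset.sum_comm]
  simp only [RCLike.star_def, RCLike.conj_mul] at h
  exact_mod_cast h

theorem trace_sum_mul_mul_conjTranspose [Fintype n] {R : Type*} [CommSemiring R] [Star R]
    {K : ι → Matrix m n R} (hK : ∑ i, (K i)ᴴ * K i = 1) (A : Matrix n n R) :
    (∑ i, K i * A * (K i)ᴴ).trace = A.trace := by
  calc (∑ i, K i * A * (K i)ᴴ).trace = ((∑ i, (K i)ᴴ * K i) * A).trace := by
        rw [trace_sum, Finset.sum_mul, trace_sum]
        exact Finset.sum_congr rfl fun i _ => trace_mul_cycle _ _ _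
    _ = A.trace := by rw [hK, one_mul]

end Kraus

section Hermitian

theorem norm_apply_comm_of_isHermitian {n 𝕜 : Type*} [RCLike 𝕜] {A : Matrix n n 𝕜}
    (hA : A.IsHermitian) (i j : n) : ‖A i j‖ = ‖A j i‖ := by
  rw [← hA.apply i j, norm_star]

theorem eq_of_isHermitian_of_trace_eq {R : Type*} [AddCommGroup R] [Star R]
    {A B : Matrix (Fin 2) (Fin 2) R} (hA : A.IsHermitian) (hB : B.IsHermitian)
    (htrace : A.trace = B.trace) (h00 : A 0 0 = B 0 0) (h01 : A 0 1 = B 0 1) : A = B := by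
  have h10 : A 1 0 = B 1 0 := by rw [← hA.apply 1 0, ← hB.apply 1 0, h01]
  have h11 : A 1 1 = B 1 1 := by
    rwa [trace_fin_two, trace_fin_two, h00, add_right_inj] at htrace
  rw [eta_fin_two A, eta_fin_two B, h00, h01, h10, h11]

end Hermitian

theorem exists_norm_eq_one_and_eq_mul {𝕜 : Type*} [NormedDivisionRing 𝕜] {z w : 𝕜}
    (h : ‖z‖ = ‖w‖) : ∃ u : 𝕜, ‖u‖ = 1 ∧ z = u * w := by
  by_cases hw : w = 0
  · exact ⟨1, norm_one, by simpa [hw] using h⟩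
  · exact ⟨z / w, by rw [norm_div, h, div_self (norm_ne_zero_iff.2 hw)],
      (div_mul_cancel₀ z hw).symm⟩

/-- Deterministic convertibility of `A` into `B` by a strictly incoherent operation, given by
finitely many Kraus operators. The matrices are not required to be states. -/
def SIOConvertible {d : ℕ} (A B : Matrix (Fin d) (Fin d) ℂ) : Prop :=
  ∃ (N : ℕ) (K : Fin N → Matrix (Fin d) (Fin d) ℂ),
    (∀ i, IsSIKraus (K i)) ∧ ∑ i, (K i)ᴴ * K i = 1 ∧ ∑ i, K i * A * (K i)ᴴ = B

section Qubit

variable {K A B : Matrix (Fin 2) (Fin 2) ℂ}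

theorem isSIKraus_fin_two_iff_s3 :
    IsSIKraus K ↔ (∃ a b, K = !![a, 0; 0, b]) ∨ ∃ a b, K = !![0, a; b, 0] := by
  constructor
  · rintro ⟨hrow, hcol⟩
    by_cases h : K 0 0 = 0 ∧ K 1 1 = 0
    · refine .inr ⟨K 0 1, K 1 0, ?_⟩
      nth_rw 1 [eta_fin_two K, h.1, h.2]
    · refine .inl ⟨K 0 0, K 1 1, ?_⟩
      have h01 : K 0 1 = 0 := by
        by_contra h01
        exact h ⟨not_not.1 fun h0 => by simpa using hrow 0 0 1 h0 h01,
          not_not.1 fun h1 => by simpa using hcol 1 0 1 h01 h1⟩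
      have h10 : K 1 0 = 0 := by
        by_contra h10
        exact h ⟨not_not.1 fun h0 => by simpa using hcol 0 0 1 h0 h10,
          not_not.1 fun h1 => by simpa using hrow 1 0 1 h10 h1⟩
      nth_rw 1 [eta_fin_two K, h01, h10]
  · rintro (⟨a, b, rfl⟩ | ⟨a, b, rfl⟩) <;> simp [IsSIKraus, Fin.forall_fin_two]

theorem IsSIKraus.mul_mul_conjTranspose_apply_zero_zero (hK : IsSIKraus K)
    (A : Matrix (Fin 2) (Fin 2) ℂ) :
    (K * A * Kᴴ) 0 0 = ‖K 0 0‖ ^ 2 * A 0 0 + ‖K 0 1‖ ^ 2 * A 1 1 := by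
  rcases isSIKraus_fin_two_iff_s3.1 hK with ⟨a, b, rfl⟩ | ⟨a, b, rfl⟩ <;>
    simp only [mul_apply, Fin.sum_univ_two, conjTranspose_apply, of_apply, cons_val_zero,
      cons_val_one, cons_val', cons_val_fin_one, Complex.star_def, ← Complex.mul_conj',
      map_zero] <;>
    ring

theorem IsSIKraus.mul_mul_conjTranspose_apply_zero_one (hK : IsSIKraus K)
    (A : Matrix (Fin 2) (Fin 2) ℂ) :
    (K * A * Kᴴ) 0 1 = K 0 0 * A 0 1 * star (K 1 1) + K 0 1 * A 1 0 * star (K 1 0) := by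
  rcases isSIKraus_fin_two_iff_s3.1 hK with ⟨a, b, rfl⟩ | ⟨a, b, rfl⟩ <;>
    simp [-cons_mul, mul_apply, Fin.sum_univ_two]

theorem norm_sum_mul_mul_conjTranspose_apply_zero_one_le {ι : Type*} [Fintype ι]
    {K : ι → Matrix (Fin 2) (Fin 2) ℂ} (hK : ∀ i, IsSIKraus (K i)) (hA : A.IsHermitian) :
    ‖(∑ i, K i * A * (K i)ᴴ) 0 1‖ ≤
      (√(∑ i, ‖K i 0 0‖ ^ 2) * √(∑ i, ‖K i 1 1‖ ^ 2) +
        √(∑ i, ‖K i 1 0‖ ^ 2) * √(∑ i, ‖K i 0 1‖ ^ 2)) * ‖A 0 1‖ := by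
  have hterm (i : ι) : ‖(K i * A * (K i)ᴴ) 0 1‖ ≤
      (‖K i 0 0‖ * ‖K i 1 1‖ + ‖K i 1 0‖ * ‖K i 0 1‖) * ‖A 0 1‖ := by
    rw [(hK i).mul_mul_conjTranspose_apply_zero_one]
    refine (norm_add_le _ _).trans_eq ?_
    simp only [norm_mul, norm_star, norm_apply_comm_of_isHermitian hA 1 0]
    ring
  calc ‖(∑ i, K i * A * (K i)ᴴ) 0 1‖
      ≤ ∑ i, (‖K i 0 0‖ * ‖K i 1 1‖ + ‖K i 1 0‖ * ‖K i 0 1‖) * ‖A 0 1‖ := by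
        rw [Matrix.sum_apply]
        exact norm_sum_le_of_le _ fun i _ => hterm i
    _ = (∑ i, ‖K i 0 0‖ * ‖K i 1 1‖ + ∑ i, ‖K i 1 0‖ * ‖K i 0 1‖) * ‖A 0 1‖ := by
        rw [← Finset.sum_mul, Finset.sum_add_distrib]
    _ ≤ _ := by
        gcongr <;> exact Real.sum_mul_le_sqrt_mul_sqrt _ _ _

theorem SIOConvertible.exists_angles (hA : A.IsHermitian) (h : SIOConvertible A B) :
    ∃ α β : ℝ, B 0 0 = (Real.cos α ^ 2 : ℝ) * A 0 0 + (Real.sin β ^ 2 : ℝ) * A 1 1 ∧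
      ‖B 0 1‖ ≤ Real.cos (α - β) * ‖A 0 1‖ := by
  obtain ⟨N, K, hSI, hone, rfl⟩ := h
  have hcol (j : Fin 2) : ∑ i, ‖K i 0 j‖ ^ 2 + ∑ i, ‖K i 1 j‖ ^ 2 = 1 := by
    rw [← Fin.sum_univ_two fun k => ∑ i, ‖K i k j‖ ^ 2, sum_sum_norm_sq_eq_one hone]
  have hnonneg (k j : Fin 2) : 0 ≤ ∑ i, ‖K i k j‖ ^ 2 := by positivity
  obtain ⟨α, hcosα, hsinα⟩ :=
    exists_cos_eq_sqrt_and_sin_eq_sqrt (hnonneg 0 0) (hnonneg 1 0) (hcol 0)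
  obtain ⟨β, hcosβ, hsinβ⟩ :=
    exists_cos_eq_sqrt_and_sin_eq_sqrt (hnonneg 1 1) (hnonneg 0 1) ((add_comm _ _).trans (hcol 1))
  refine ⟨α, β, ?_, ?_⟩
  · rw [hcosα, hsinβ, Real.sq_sqrt (hnonneg 0 0), Real.sq_sqrt (hnonneg 0 1),
      Matrix.sum_apply]
    simp only [(hSI _).mul_mul_conjTranspose_apply_zero_zero, Finset.sum_add_distrib,
      ← Finset.sum_mul, Complex.ofReal_sum, Complex.ofReal_pow]
  · rw [Real.cos_sub, hcosα, hsinα, hcosβ, hsinβ]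
    exact norm_sum_mul_mul_conjTranspose_apply_zero_one_le hSI hA

/-- The Kraus operators of the strictly incoherent qubit operation with angles `α`, `β`: one
diagonal and one antidiagonal operator, whose phases `ω`, `ν` serve to align the two contributions
to the output coherence. -/
noncomputable def angleKraus (ω ν : ℂ) (α β : ℝ) : Fin 2 → Matrix (Fin 2) (Fin 2) ℂ :=
  ![!![ω * Real.cos α, 0; 0, Real.cos β], !![0, ν * Real.sin β; Real.sin α, 0]]

section AngleKraus

variable {ω ν : ℂ}

theorem isSIKraus_angleKraus (ω ν : ℂ) (α β : ℝ) (i : Fin 2) :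
    IsSIKraus (angleKraus ω ν α β i) := by
  fin_cases i
  · exact isSIKraus_fin_two_iff_s3.2 (.inl ⟨_, _, rfl⟩)
  · exact isSIKraus_fin_two_iff_s3.2 (.inr ⟨_, _, rfl⟩)

theorem sum_conjTranspose_mul_self_angleKraus (hω : ‖ω‖ = 1) (hν : ‖ν‖ = 1) (α β : ℝ) :
    ∑ i, (angleKraus ω ν α β i)ᴴ * angleKraus ω ν α β i = 1 := by
  have hω' : starRingEnd ℂ ω * ω = 1 := by simp [Complex.conj_mul', hω]
  have hν' : starRingEnd ℂ ν * ν = 1 := by simp [Complex.conj_mul', hν]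
  have hα : (Real.sin α : ℂ) ^ 2 + Real.cos α ^ 2 = 1 := mod_cast Real.sin_sq_add_cos_sq α
  have hβ : (Real.sin β : ℂ) ^ 2 + Real.cos β ^ 2 = 1 := mod_cast Real.sin_sq_add_cos_sq β
  ext j k
  fin_cases j <;> fin_cases k <;>
    simp only [angleKraus, Fin.zero_eta, Fin.mk_one, Fin.sum_univ_two, cons_val_zero, cons_val_one,
      cons_val', cons_val_fin_one, of_apply, Matrix.add_apply, mul_apply, conjTranspose_apply,
      Complex.star_def, map_mul, map_zero, Complex.conj_ofReal, one_apply_eq]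
  · linear_combination (Real.cos α : ℂ) ^ 2 * hω' + hα
  · simp
  · simp
  · linear_combination (Real.sin β : ℂ) ^ 2 * hν' + hβ

theorem sum_angleKraus_apply_zero_zero (hω : ‖ω‖ = 1) (hν : ‖ν‖ = 1) (α β : ℝ)
    (A : Matrix (Fin 2) (Fin 2) ℂ) :
    (∑ i, angleKraus ω ν α β i * A * (angleKraus ω ν α β i)ᴴ) 0 0 =
      (Real.cos α ^ 2 : ℝ) * A 0 0 + (Real.sin β ^ 2 : ℝ) * A 1 1 := by
  simp only [Matrix.sum_apply,
    (isSIKraus_angleKraus ω ν α β _).mul_mul_conjTranspose_apply_zero_zero, Fin.sum_univ_two]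
  simp [angleKraus, hω, hν, -Complex.ofReal_cos, -Complex.ofReal_sin, ← Complex.ofReal_pow]

theorem sum_angleKraus_apply_zero_one (h : ω * A 0 1 = ν * A 1 0) (α β : ℝ) :
    (∑ i, angleKraus ω ν α β i * A * (angleKraus ω ν α β i)ᴴ) 0 1 =
      ω * (Real.cos (α - β) * A 0 1) := by
  simp only [Matrix.sum_apply,
    (isSIKraus_angleKraus ω ν α β _).mul_mul_conjTranspose_apply_zero_one, Fin.sum_univ_two]
  simp only [angleKraus, cons_val_zero, cons_val_one, cons_val', cons_val_fin_one, of_apply,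
    Complex.star_def, Complex.conj_ofReal, Real.cos_sub, Complex.ofReal_add, Complex.ofReal_mul]
  linear_combination -Real.sin α * Real.sin β * h

end AngleKraus

theorem sioConvertible_of_angles {α β : ℝ} (hA : A.IsHermitian) (hB : B.IsHermitian)
    (htrace : A.trace = B.trace)
    (h00 : B 0 0 = (Real.cos α ^ 2 : ℝ) * A 0 0 + (Real.sin β ^ 2 : ℝ) * A 1 1)
    (h01 : ‖B 0 1‖ = Real.cos (α - β) * ‖A 0 1‖) : SIOConvertible A B := by
  have hnorm : ‖B 0 1‖ = ‖(Real.cos (α - β) : ℂ) * A 0 1‖ := by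
    rw [norm_mul, Complex.norm_real, Real.norm_eq_abs, ← abs_norm (B 0 1), h01, abs_mul, abs_norm]
  obtain ⟨ω, hω, hBA⟩ := exists_norm_eq_one_and_eq_mul hnorm
  obtain ⟨ν, hν, hων⟩ : ∃ ν : ℂ, ‖ν‖ = 1 ∧ ω * A 0 1 = ν * A 1 0 :=
    exists_norm_eq_one_and_eq_mul (by
      rw [norm_mul, hω, one_mul, norm_apply_comm_of_isHermitian hA 1 0])
  have hone := sum_conjTranspose_mul_self_angleKraus hω hν α β
  refine ⟨2, angleKraus ω ν α β, isSIKraus_angleKraus ω ν α β, hone,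
    eq_of_isHermitian_of_trace_eq ?_ hB ((trace_sum_mul_mul_conjTranspose hone A).trans htrace)
      ?_ ?_⟩
  · exact isSelfAdjoint_sum _ fun i _ => isHermitian_mul_mul_conjTranspose _ hA
  · rw [sum_angleKraus_apply_zero_zero hω hν, h00]
  · rw [sum_angleKraus_apply_zero_one hων, hBA]

end Qubit

section BlochState

theorem blochState_isHermitian (x y z : ℝ) : (blochState x y z).IsHermitian := by
  refine IsHermitian.ext fun i j => ?_
  fin_cases i <;> fin_cases j <;> simp [blochState, sub_eq_add_neg]

theorem trace_blochState (x y z : ℝ) : (blochState x y z).trace = 1 := by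
  rw [blochState, trace_fin_two_of]
  ring

theorem norm_blochState_apply_zero_one (x y z : ℝ) :
    ‖blochState x y z 0 1‖ = √(x ^ 2 + y ^ 2) / 2 := by
  have h : blochState x y z 0 1 = (x + (-y : ℝ) * Complex.I) / 2 := by
    simp [blochState, sub_eq_add_neg]
  rw [h, norm_div, Complex.norm_add_mul_I, neg_sq, Complex.norm_ofNat]

variable {rx ry rz sx sy sz : ℝ}

theorem blochState_apply_zero_zero_eq_iff {p q : ℝ} :
    blochState sx sy sz 0 0 = p * blochState rx ry rz 0 0 + q * blochState rx ry rz 1 1 ↔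
      p * (1 + rz) + q * (1 - rz) = 1 + sz := by
  change ((1 + sz) / 2 : ℂ) = p * ((1 + rz) / 2) + q * ((1 - rz) / 2) ↔ _
  norm_cast
  constructor <;> intro h <;> linarith

theorem SIOConvertible.exists_angles_blochState
    (h : SIOConvertible (blochState rx ry rz) (blochState sx sy sz)) :
    ∃ α β, Real.cos α ^ 2 * (1 + rz) + Real.sin β ^ 2 * (1 - rz) = 1 + sz ∧
      √(sx ^ 2 + sy ^ 2) ≤ Real.cos (α - β) * √(rx ^ 2 + ry ^ 2) := by
  obtain ⟨α, β, h00, h01⟩ := h.exists_angles (blochState_isHermitian rx ry rz)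
  refine ⟨α, β, blochState_apply_zero_zero_eq_iff.1 h00, ?_⟩
  rw [norm_blochState_apply_zero_one, norm_blochState_apply_zero_one] at h01
  linarith

theorem sioConvertible_blochState_of_angles {α β : ℝ}
    (hz : Real.cos α ^ 2 * (1 + rz) + Real.sin β ^ 2 * (1 - rz) = 1 + sz)
    (hxy : √(sx ^ 2 + sy ^ 2) = Real.cos (α - β) * √(rx ^ 2 + ry ^ 2)) :
    SIOConvertible (blochState rx ry rz) (blochState sx sy sz) := by
  refine sioConvertible_of_angles (blochState_isHermitian _ _ _) (blochState_isHermitian _ _ _)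
    (by rw [trace_blochState, trace_blochState]) (blochState_apply_zero_zero_eq_iff.2 hz) ?_
  rw [norm_blochState_apply_zero_one, norm_blochState_apply_zero_one, hxy, mul_div_assoc]

end BlochState

section CoherenceRatio

variable {r s z m : ℝ}

theorem sq_mul_sq_add_mul_sq_le_of_le_mul {f : ℝ} (hs : 0 ≤ s) (hz : z ^ 2 ≤ 1)
    (hf : m ^ 2 + (1 - z ^ 2) * f ^ 2 ≤ 1) (hsf : s ≤ f * r) :
    r ^ 2 * m ^ 2 + (1 - z ^ 2) * s ^ 2 ≤ r ^ 2 := by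
  calc r ^ 2 * m ^ 2 + (1 - z ^ 2) * s ^ 2
      ≤ r ^ 2 * m ^ 2 + (1 - z ^ 2) * (f * r) ^ 2 := by gcongr
    _ = r ^ 2 * (m ^ 2 + (1 - z ^ 2) * f ^ 2) := by ring
    _ ≤ r ^ 2 := mul_le_of_le_one_right (sq_nonneg r) hf

theorem exists_coherence_ratio (hs : 0 ≤ s) (hsr : s ≤ r) (hm : m ^ 2 ≤ 1)
    (h : r ^ 2 * m ^ 2 + (1 - z ^ 2) * s ^ 2 ≤ r ^ 2) :
    ∃ f, |f| ≤ 1 ∧ m ^ 2 + (1 - z ^ 2) * f ^ 2 ≤ 1 ∧ s = f * r := by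
  rcases (hs.trans hsr).eq_or_lt with rfl | hr
  · exact ⟨0, by simp, by simpa using hm, by linarith⟩
  · have hs' : s = s / r * r := (div_mul_cancel₀ s hr.ne').symm
    refine ⟨s / r, ?_, ?_, hs'⟩
    · rw [abs_of_nonneg (by positivity)]
      exact (div_le_one hr).2 hsr
    · refine le_of_mul_le_mul_left ?_ (pow_pos hr 2)
      calc r ^ 2 * (m ^ 2 + (1 - z ^ 2) * (s / r) ^ 2)
          = r ^ 2 * m ^ 2 + (1 - z ^ 2) * (s / r * r) ^ 2 := by ring
        _ ≤ r ^ 2 * 1 := by rwa [← hs', mul_one]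

end CoherenceRatio

theorem deterministic_sio_qubit_conversion_iff_general {rx ry rz sx sy sz : ℝ}
    (hrz : rz ^ 2 ≤ 1) (hsz : sz ^ 2 ≤ 1) :
    SIOConvertible (blochState rx ry rz) (blochState sx sy sz) ↔
      (rx ^ 2 + ry ^ 2) * sz ^ 2 + (1 - rz ^ 2) * (sx ^ 2 + sy ^ 2) ≤ rx ^ 2 + ry ^ 2 ∧
        √(sx ^ 2 + sy ^ 2) ≤ √(rx ^ 2 + ry ^ 2) := by
  have hr := Real.sq_sqrt (show 0 ≤ rx ^ 2 + ry ^ 2 by positivity)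
  have hs := Real.sq_sqrt (show 0 ≤ sx ^ 2 + sy ^ 2 by positivity)
  constructor
  · intro h
    obtain ⟨α, β, hpop, hcoh⟩ := h.exists_angles_blochState
    obtain ⟨hf, hellipse⟩ := exists_angles_iff.1 ⟨α, β, rfl, hpop⟩
    constructor
    · simpa only [hr, hs] using
        sq_mul_sq_add_mul_sq_le_of_le_mul (Real.sqrt_nonneg _) hrz hellipse hcoh
    · exact hcoh.trans (mul_le_of_le_one_left (Real.sqrt_nonneg _) (le_of_abs_le hf))
  · rintro ⟨h, hle⟩
    obtain ⟨f, hf, hellipse, hsf⟩ :=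
      exists_coherence_ratio (z := rz) (Real.sqrt_nonneg _) hle hsz (by rwa [hr, hs])
    obtain ⟨α, β, rfl, hpop⟩ := exists_angles_iff.2 ⟨hf, hellipse⟩
    exact sioConvertible_blochState_of_angles hpop hsf

/-- Deterministic conversion of the qubit state `ρ` into `σ` by a strictly incoherent
operation is possible iff `r² sz² + (1-rz²) s² ≤ r²` and `s ≤ r`. -/
theorem deterministic_sio_qubit_conversion_iff
    (rx ry rz sx sy sz : ℝ)
    (hr : rx ^ 2 + ry ^ 2 + rz ^ 2 ≤ 1) (hs : sx ^ 2 + sy ^ 2 + sz ^ 2 ≤ 1) :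
    (∃ (N : ℕ) (K : Fin N → Matrix (Fin 2) (Fin 2) ℂ),
        (∀ i, IsSIKraus (K i)) ∧
        (∑ i, (K i)ᴴ * K i = 1) ∧
        ∑ i, K i * blochState rx ry rz * (K i)ᴴ = blochState sx sy sz) ↔
    ((rx ^ 2 + ry ^ 2) * sz ^ 2 + (1 - rz ^ 2) * (sx ^ 2 + sy ^ 2) ≤ rx ^ 2 + ry ^ 2 ∧
      Real.sqrt (sx ^ 2 + sy ^ 2) ≤ Real.sqrt (rx ^ 2 + ry ^ 2)) :=
  deterministic_sio_qubit_conversion_iff_general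
    (by linarith [sq_nonneg rx, sq_nonneg ry]) (by linarith [sq_nonneg sx, sq_nonneg sy])
end
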